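/- Let P be the Borel probability measure on ℝ with density f given by f(x) = 1/2 for x ∈ [0, 1/2] ∪ [1, 3/2], f(x) = 1 for x ∈ (1/2, 1), and f(x) = 0 otherwise. Let n ≥ 4 be an even positive integer and let α_n be an optimal set of n-means for P with card(α_n ∩ [0, 1/2]) = k and card(α_n ∩ (1/2, 3/4)) = m for positive integers k and m. Then for every optimal set α_{n+2} of (n + 2)-means for P, either card(α_{n+2} ∩ [0, 1/2]) = k + 1 and card(α_{n+2} ∩ (1/2, 3/4)) = m, or card(α_{n+2} ∩ [0, 1/2]) = k and card(α_{n+2} ∩ (1/2, 3/4)) = m + 1. -/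

import Mathlib

open MeasureTheory Set

/-- Distortion error of a set `α` with respect to the measure `Q`. -/
noncomputable def distortion (Q : Measure ℝ) (α : Set ℝ) : ℝ :=
  ∫ x, sInf ((fun a => (x - a) ^ 2) '' α) ∂Q

/-- The `n`-th quantization error of the measure `Q`. -/
noncomputable def quantErr (Q : Measure ℝ) (n : ℕ) : ℝ :=
  sInf { v : ℝ | ∃ α : Set ℝ, α.Finite ∧ α.Nonempty ∧ α.ncard ≤ n ∧ v = distortion Q α }

/-- `α` is an optimal set of `n`-means for `Q`. -/
def IsOptimal (Q : Measure ℝ) (n : ℕ) (α : Set ℝ) : Prop :=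
  α.Finite ∧ 1 ≤ α.ncard ∧ α.ncard ≤ n ∧ distortion Q α = quantErr Q n

/-- The density of the mixed distribution `P = (1/2) P₁ + (1/2) P₂`. -/
noncomputable def f2 (x : ℝ) : ℝ :=
  if x ∈ Icc (0 : ℝ) (1 / 2) ∪ Icc (1 : ℝ) (3 / 2) then 1 / 2
  else if x ∈ Ioo (1 / 2 : ℝ) 1 then 1
  else 0

/-- The mixed distribution `P = (1/2) P₁ + (1/2) P₂`. -/
noncomputable def P2 : Measure ℝ :=
  volume.withDensity fun x => ENNReal.ofReal (f2 x)

/-!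
An optimal set of `n`-means is a partition into cells represented by their centroids, with breaks
halfway between neighbouring points. Exchanging cells between two optimal partitions shows that
their breaks interlace, so that passing from `n` to `n + 2` the number of points in `[0, 1 / 2]`
grows by `0`, `1` or `2`. For even `n`, comparison with the mirror image puts exactly `n / 2` points
to the left of the centre of symmetry `3 / 4`, which leaves only growth by `2` to be excluded.

The cells are equally wide on each side of `1 / 2`. Let `r` be the ratio of the left half-width to
the middle one and `a` the odd number of half-cells of the left width. Moving one cell across
`1 / 2` must not lower the cost, which forces `r ^ 3 = 2 + O(1 / a)`: cells in a density `w` have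
width proportional to `w ^ (-1 / 3)`, as one expects asymptotically. As `[0, 1 / 2]` and
`[1 / 2, 1]` have the same length and a gain of two points on the left leaves no room for further
middle cells, the left side, measured in middle cells, could not have become longer; but two cells
more at nearly the same ratio do make it longer.
-/

section Cell

/-- A density which is positive on the open interval `(a, b)`. Local integrability is required on
the whole line, so that sums of cell moments make sense without further conditions. -/
structure IsDensityOn (f : ℝ → ℝ) (a b : ℝ) : Prop where
  locallyIntegrable : LocallyIntegrable f
  pos : ∀ x ∈ Ioo a b, 0 < f x

/-- The `k`-th moment about `p` of the density `f` on the cell `[a, b]`. For `k = 2` this is the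
cost of quantizing the cell by `p`, and `p` is the centroid of the cell when the first moment
vanishes. -/
noncomputable def cellMoment (f : ℝ → ℝ) (k : ℕ) (a b p : ℝ) : ℝ :=
  ∫ x in a..b, (x - p) ^ k * f x

variable {f : ℝ → ℝ} {a b c d p q a' b' p' : ℝ}

theorem IsDensityOn.mono (hf : IsDensityOn f a b) (ha : a ≤ a') (hb : b' ≤ b) :
    IsDensityOn f a' b' :=
  ⟨hf.locallyIntegrable, fun x hx => hf.pos x (Ioo_subset_Ioo ha hb hx)⟩

theorem intervalIntegrable_sub_pow_mul (hf : LocallyIntegrable f) (k : ℕ) (a b p : ℝ) :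
    IntervalIntegrable (fun x => (x - p) ^ k * f x) volume a b :=
  (hf.integrableOn_isCompact isCompact_uIcc).intervalIntegrable.continuousOn_mul (by fun_prop)

@[simp]
theorem cellMoment_self (f : ℝ → ℝ) (k : ℕ) (a p : ℝ) : cellMoment f k a a p = 0 :=
  intervalIntegral.integral_same

theorem cellMoment_add (hf : LocallyIntegrable f) (k : ℕ) (a b c p : ℝ) :
    cellMoment f k a b p + cellMoment f k b c p = cellMoment f k a c p :=
  intervalIntegral.integral_add_adjacent_intervals (intervalIntegrable_sub_pow_mul hf ..)
    (intervalIntegrable_sub_pow_mul hf ..)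

theorem cellMoment_one_sub (hf : LocallyIntegrable f) (a b p q : ℝ) :
    cellMoment f 1 a b p - cellMoment f 1 a b q = (q - p) * ∫ x in a..b, f x := by
  unfold cellMoment
  rw [← intervalIntegral.integral_sub (intervalIntegrable_sub_pow_mul hf ..)
    (intervalIntegrable_sub_pow_mul hf ..), ← intervalIntegral.integral_const_mul]
  congr with x
  ring

theorem cellMoment_two_sub (hf : LocallyIntegrable f) (a b p q : ℝ) :
    cellMoment f 2 a b p - cellMoment f 2 a b q
      = 2 * (q - p) * cellMoment f 1 a b ((p + q) / 2) := by
  unfold cellMoment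
  rw [← intervalIntegral.integral_sub (intervalIntegrable_sub_pow_mul hf ..)
    (intervalIntegrable_sub_pow_mul hf ..), ← intervalIntegral.integral_const_mul]
  congr with x
  ring

theorem cellMoment_two_eq_add_of_centroid (hf : LocallyIntegrable f)
    (hq : cellMoment f 1 a b q = 0) (p : ℝ) :
    cellMoment f 2 a b p = cellMoment f 2 a b q + (p - q) ^ 2 * ∫ x in a..b, f x := by
  linear_combination cellMoment_two_sub hf a b p q +
    2 * (q - p) * cellMoment_one_sub hf a b ((p + q) / 2) q + 2 * (q - p) * hq

theorem cellMoment_reflect (f : ℝ → ℝ) (k : ℕ) (σ a b p : ℝ) :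
    cellMoment (fun x => f (σ - x)) k (σ - b) (σ - a) (σ - p)
      = (-1) ^ k * cellMoment f k a b p := by
  unfold cellMoment
  rw [← intervalIntegral.integral_comp_sub_left, ← intervalIntegral.integral_const_mul]
  congr with x
  beta_reduce
  rw [sub_sub_sub_cancel_left, sub_sub_cancel, ← mul_assoc, ← mul_pow, neg_one_mul, neg_sub]

theorem IsDensityOn.reflect (hf : IsDensityOn f a b) (σ : ℝ) :
    IsDensityOn (fun x => f (σ - x)) (σ - b) (σ - a) where
  locallyIntegrable := by
    refine (locallyIntegrable_map_homeomorph (Homeomorph.subLeft σ)).mp ?_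
    rw [show Measure.map (Homeomorph.subLeft σ) volume = volume from
      (Measure.measurePreserving_sub_left volume σ).map_eq]
    exact hf.locallyIntegrable
  pos x hx := hf.pos _ ⟨by linarith [hx.2], by linarith [hx.1]⟩

theorem IsDensityOn.integral_pos (hf : IsDensityOn f a b) (hab : a < b) :
    0 < ∫ x in a..b, f x :=
  intervalIntegral.intervalIntegral_pos_of_pos_on
    (hf.locallyIntegrable.integrableOn_isCompact isCompact_uIcc).intervalIntegrable hf.pos hab

theorem IsDensityOn.cellMoment_pos (hf : IsDensityOn f a b) (k : ℕ) (hab : a < b) (hp : p ≤ a) :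
    0 < cellMoment f k a b p :=
  intervalIntegral.intervalIntegral_pos_of_pos_on
    (intervalIntegrable_sub_pow_mul hf.locallyIntegrable ..)
    (fun x hx => mul_pos (pow_pos (by linarith [hx.1]) k) (hf.pos x hx)) hab

theorem IsDensityOn.cellMoment_one_neg (hf : IsDensityOn f a b) (hab : a < b) (hp : b ≤ p) :
    cellMoment f 1 a b p < 0 := by
  have := (hf.reflect 0).cellMoment_pos 1 (by linarith) (p := 0 - p) (by linarith)
  rw [cellMoment_reflect] at this
  linarith

theorem IsDensityOn.cellMoment_one_nonneg (hf : IsDensityOn f a b) (hab : a ≤ b) (hp : p ≤ a) :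
    0 ≤ cellMoment f 1 a b p := by
  rcases hab.eq_or_lt with rfl | hab
  · simp
  · exact (hf.cellMoment_pos 1 hab hp).le

theorem IsDensityOn.cellMoment_one_nonpos (hf : IsDensityOn f a b) (hab : a ≤ b) (hp : b ≤ p) :
    cellMoment f 1 a b p ≤ 0 := by
  rcases hab.eq_or_lt with rfl | hab
  · simp
  · exact (hf.cellMoment_one_neg hab hp).le

theorem IsDensityOn.exists_centroid (hf : IsDensityOn f a b) (hab : a < b) :
    ∃ q, cellMoment f 1 a b q = 0 := by
  have hmass := hf.integral_pos hab
  refine ⟨cellMoment f 1 a b 0 / ∫ x in a..b, f x, ?_⟩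
  have h := cellMoment_one_sub hf.locallyIntegrable a b
    (cellMoment f 1 a b 0 / ∫ x in a..b, f x) 0
  rw [zero_sub, neg_mul, div_mul_cancel₀ _ hmass.ne'] at h
  linarith

theorem IsDensityOn.centroid_mem_Ioo (hf : IsDensityOn f a b) (hab : a < b)
    (hp : cellMoment f 1 a b p = 0) : p ∈ Ioo a b := by
  constructor <;> by_contra! h
  · exact (hf.cellMoment_pos 1 hab h).ne' hp
  · exact (hf.cellMoment_one_neg hab h).ne hp

theorem IsDensityOn.centroid_lt_centroid (hf : IsDensityOn f a b') (hab : a < b) (hab' : a' < b')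
    (ha : a ≤ a') (hb : b ≤ b') (hne : a < a' ∨ b < b')
    (hp : cellMoment f 1 a b p = 0) (hp' : cellMoment f 1 a' b' p' = 0) : p < p' := by
  have hpmem := (hf.mono le_rfl hb).centroid_mem_Ioo hab hp
  have hpmem' := (hf.mono ha le_rfl).centroid_mem_Ioo hab' hp'
  rcases lt_or_ge p a' with hpa | hpa
  · exact hpa.trans hpmem'.1
  have hfa : IsDensityOn f a a' := hf.mono le_rfl hab'.le
  have hfb : IsDensityOn f b b' := hf.mono hab.le le_rfl
  have hsum : cellMoment f 1 a' b' p = cellMoment f 1 b b' p - cellMoment f 1 a a' p := by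
    linarith [cellMoment_add hf.locallyIntegrable 1 a a' b' p,
      cellMoment_add hf.locallyIntegrable 1 a b b' p]
  have hpos : 0 < cellMoment f 1 a' b' p := by
    rcases hne with hlt | hlt
    · linarith [hfa.cellMoment_one_neg hlt hpa, hfb.cellMoment_one_nonneg hb hpmem.2.le]
    · linarith [hfa.cellMoment_one_nonpos ha hpa, hfb.cellMoment_pos 1 hlt hpmem.2.le]
  have hmass := (hf.mono ha le_rfl).integral_pos hab'
  have hshift := cellMoment_one_sub hf.locallyIntegrable a' b' p p'
  rw [hp', sub_zero] at hshift
  exact sub_pos.mp (pos_of_mul_pos_left (hshift ▸ hpos) hmass.le)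

theorem IsDensityOn.centroid_le_centroid (hf : IsDensityOn f a b') (hab : a < b) (hab' : a' < b')
    (ha : a ≤ a') (hb : b ≤ b')
    (hp : cellMoment f 1 a b p = 0) (hp' : cellMoment f 1 a' b' p' = 0) : p ≤ p' := by
  by_cases hne : a < a' ∨ b < b'
  · exact (hf.centroid_lt_centroid hab hab' ha hb hne hp hp').le
  · obtain rfl : a = a' := by grind
    obtain rfl : b = b' := by grind
    have hshift := cellMoment_one_sub hf.locallyIntegrable a b p p'
    rw [hp, hp', sub_zero, zero_eq_mul, or_iff_left (hf.integral_pos hab).ne'] at hshift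
    linarith

theorem IsDensityOn.exists_split_cellMoment_two_lt (hf : IsDensityOn f a b) (hab : a < b) (p : ℝ) :
    ∃ t ∈ Icc a b, ∃ q q', cellMoment f 2 a t q + cellMoment f 2 t b q' < cellMoment f 2 a b p := by
  obtain ⟨hat, htb⟩ : a < (a + b) / 2 ∧ (a + b) / 2 < b := ⟨by linarith, by linarith⟩
  set t := (a + b) / 2
  have hfl : IsDensityOn f a t := hf.mono le_rfl htb.le
  have hfr : IsDensityOn f t b := hf.mono hat.le le_rfl
  obtain ⟨q, hq⟩ := hfl.exists_centroid hat
  obtain ⟨q', hq'⟩ := hfr.exists_centroid htb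
  refine ⟨t, ⟨hat.le, htb.le⟩, q, q', ?_⟩
  rw [← cellMoment_add hf.locallyIntegrable 2 a t b p,
    cellMoment_two_eq_add_of_centroid hf.locallyIntegrable hq p,
    cellMoment_two_eq_add_of_centroid hf.locallyIntegrable hq' p]
  have hqq' : q < q' := (hfl.centroid_mem_Ioo hat hq).2.trans (hfr.centroid_mem_Ioo htb hq').1
  have hml := hfl.integral_pos hat
  have hmr := hfr.integral_pos htb
  rcases eq_or_ne p q with rfl | hpq
  · have : 0 < (p - q') ^ 2 := sq_pos_of_ne_zero (sub_ne_zero.mpr hqq'.ne)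
    nlinarith
  · have : 0 < (p - q) ^ 2 := sq_pos_of_ne_zero (sub_ne_zero.mpr hpq)
    nlinarith [sq_nonneg (p - q')]

theorem IsDensityOn.exchange_nested_cells (hf : IsDensityOn f a d) (hab : a ≤ b) (hbc : b ≤ c)
    (hcd : c ≤ d) (hq : q ∈ Icc b c) (p : ℝ) :
    cellMoment f 2 a c (min p q) + cellMoment f 2 b d (max p q)
      ≤ cellMoment f 2 a d p + cellMoment f 2 b c q := by
  have hloc := hf.locallyIntegrable
  rcases le_total p q with h | h
  · rw [min_eq_left h, max_eq_right h]
    have hsplit := cellMoment_add hloc 2 a c d p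
    have hsplit' := cellMoment_add hloc 2 b c d q
    have hshift := cellMoment_two_sub hloc c d p q
    have hmom := (hf.mono (hab.trans hbc) le_rfl).cellMoment_one_nonneg hcd
      (p := (p + q) / 2) (by linarith [hq.2])
    nlinarith
  · rw [min_eq_right h, max_eq_left h]
    have hsplit := cellMoment_add hloc 2 a b d p
    have hsplit' := cellMoment_add hloc 2 a b c q
    have hshift := cellMoment_two_sub hloc a b p q
    have hmom := (hf.mono le_rfl (hbc.trans hcd)).cellMoment_one_nonpos hab
      (p := (p + q) / 2) (by linarith [hq.1])
    nlinarith

theorem cellMoment_of_eq_const {w : ℝ} (hab : a ≤ b) (hf : ∀ x ∈ Ioo a b, f x = w)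
    (k : ℕ) (p : ℝ) :
    cellMoment f k a b p = w * ((b - p) ^ (k + 1) - (a - p) ^ (k + 1)) / (k + 1) := by
  have hcongr : cellMoment f k a b p = ∫ x in a..b, w * (x - p) ^ k :=
    intervalIntegral.integral_congr_Ioo_of_le hab fun x hx => by
      simp only [hf x hx, mul_comm w]
  rw [hcongr, intervalIntegral.integral_const_mul,
    intervalIntegral.integral_comp_sub_right (fun x => x ^ k) p, integral_pow, mul_div_assoc]

end Cell

section Quantizer

/-- The points `c m ≤ ⋯ ≤ c n` cut `[lo, hi]` into the cells `[c i, c (i + 1)]`, `m ≤ i < n`. The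
values of `c` outside `[m, n]` are irrelevant; allowing `m ≠ 0` lets two partitions be compared
after a shift of the index. -/
structure IsPartition (lo hi : ℝ) (m n : ℕ) (c : ℕ → ℝ) : Prop where
  first : c m = lo
  last : c n = hi
  le_succ : ∀ i, m ≤ i → i < n → c i ≤ c (i + 1)

/-- The total cost of quantizing the cell `[c i, c (i + 1)]` by the point `p i` for `m ≤ i < n`. -/
noncomputable def quantizerCost (f : ℝ → ℝ) (m n : ℕ) (c p : ℕ → ℝ) : ℝ :=
  ∑ i ∈ Finset.Ico m n, cellMoment f 2 (c i) (c (i + 1)) (p i)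

/-- The cells bounded by `c` and the points `p` have the least cost among all choices of cells and
points with the same index range. -/
structure IsOptimalQuantizer (f : ℝ → ℝ) (lo hi : ℝ) (m n : ℕ) (c p : ℕ → ℝ) : Prop where
  isPartition : IsPartition lo hi m n c
  cost_le : ∀ c' p', IsPartition lo hi m n c' → quantizerCost f m n c p ≤ quantizerCost f m n c' p'

variable {f : ℝ → ℝ} {lo hi : ℝ} {m n i j : ℕ} {c p c' p' : ℕ → ℝ}

namespace IsPartition

theorem mono (h : IsPartition lo hi m n c) (hmi : m ≤ i) (hij : i ≤ j) (hjn : j ≤ n) :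
    c i ≤ c j := by
  induction j, hij using Nat.le_induction with
  | base => exact le_rfl
  | succ k hik ih => exact (ih (by omega)).trans (h.le_succ k (by omega) (by omega))

theorem lo_le (h : IsPartition lo hi m n c) (hmi : m ≤ i) (hin : i ≤ n) : lo ≤ c i :=
  h.first ▸ h.mono le_rfl hmi hin

theorem le_hi (h : IsPartition lo hi m n c) (hmi : m ≤ i) (hin : i ≤ n) : c i ≤ hi :=
  h.last ▸ h.mono hmi hin le_rfl

theorem reflect (h : IsPartition lo hi 0 n c) (σ : ℝ) :
    IsPartition (σ - hi) (σ - lo) 0 n fun i => σ - c (n - i) where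
  first := by simp [h.last]
  last := by simp [h.first]
  le_succ i _ hi := by
    have := h.mono (i := n - (i + 1)) (j := n - i) (by omega) (by omega) (by omega)
    linarith

theorem shift (h : IsPartition lo hi m n c) (d : ℕ) :
    IsPartition lo hi (m + d) (n + d) fun i => c (i - d) where
  first := by simp [h.first]
  last := by simp [h.last]
  le_succ i _ _ := h.mono (by omega) (by omega) (by omega)

end IsPartition

theorem quantizerCost_sub_eq_sum {S : Finset ℕ} (hS : S ⊆ Finset.Ico m n)
    (h : ∀ x ∉ S, c' x = c x ∧ c' (x + 1) = c (x + 1) ∧ p' x = p x) :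
    quantizerCost f m n c' p' - quantizerCost f m n c p
      = ∑ x ∈ S, (cellMoment f 2 (c' x) (c' (x + 1)) (p' x)
          - cellMoment f 2 (c x) (c (x + 1)) (p x)) := by
  rw [quantizerCost, quantizerCost, ← Finset.sum_sub_distrib]
  refine (Finset.sum_subset hS fun x _ hx => ?_).symm
  obtain ⟨hc, hc', hp⟩ := h x hx
  rw [hc, hc', hp, sub_self]

theorem quantizerCost_reflect (f : ℝ → ℝ) (n : ℕ) (c p : ℕ → ℝ) (σ : ℝ) :
    quantizerCost (fun x => f (σ - x)) 0 n (fun i => σ - c (n - i)) (fun i => σ - p (n - 1 - i))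
      = quantizerCost f 0 n c p := by
  simp only [quantizerCost, ← Finset.range_eq_Ico]
  rw [← Finset.sum_range_reflect (fun i => cellMoment f 2 (c i) (c (i + 1)) (p i))]
  refine Finset.sum_congr rfl fun i hi => ?_
  have hi := Finset.mem_range.mp hi
  rw [cellMoment_reflect, neg_one_sq, one_mul, show n - (i + 1) = n - 1 - i by omega,
    show n - i = n - 1 - i + 1 by omega]

theorem quantizerCost_shift (f : ℝ → ℝ) (m n d : ℕ) (c p : ℕ → ℝ) :
    quantizerCost f (m + d) (n + d) c p
      = quantizerCost f m n (fun i => c (i + d)) (fun i => p (i + d)) := by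
  simp only [quantizerCost, ← Finset.sum_Ico_add', add_right_comm]

namespace IsOptimalQuantizer

theorem cellMoment_le (h : IsOptimalQuantizer f lo hi m n c p) (hmi : m ≤ i) (hin : i < n)
    (q : ℝ) : cellMoment f 2 (c i) (c (i + 1)) (p i) ≤ cellMoment f 2 (c i) (c (i + 1)) q := by
  have hle := h.cost_le c (Function.update p i q) h.isPartition
  have hdiff := quantizerCost_sub_eq_sum (f := f) (m := m) (n := n) (S := {i}) (c' := c) (c := c)
    (p' := Function.update p i q) (p := p) (by grind) (by grind)
  rw [Finset.sum_singleton, Function.update_self] at hdiff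
  linarith

theorem cellMoment_add_le (h : IsOptimalQuantizer f lo hi m n c p) (hmi : m ≤ i) (hin : i + 1 < n)
    {t : ℝ} (ht : t ∈ Icc (c i) (c (i + 2))) (q q' : ℝ) :
    cellMoment f 2 (c i) (c (i + 1)) (p i) + cellMoment f 2 (c (i + 1)) (c (i + 2)) (p (i + 1))
      ≤ cellMoment f 2 (c i) t q + cellMoment f 2 t (c (i + 2)) q' := by
  have hpart : IsPartition lo hi m n (Function.update c (i + 1) t) := by
    refine ⟨?_, ?_, fun x hmx hxn => ?_⟩
    · rw [Function.update_of_ne (by omega), h.isPartition.first]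
    · rw [Function.update_of_ne (by omega), h.isPartition.last]
    · have := h.isPartition.le_succ x hmx hxn
      have := ht.1
      have := ht.2
      grind
  have hle := h.cost_le _ (Function.update (Function.update p i q) (i + 1) q') hpart
  have hdiff := quantizerCost_sub_eq_sum (f := f) (m := m) (n := n) (S := {i, i + 1}) (c := c)
    (c' := Function.update c (i + 1) t) (p := p)
    (p' := Function.update (Function.update p i q) (i + 1) q')
    (by grind) (by grind)
  rw [Finset.sum_pair (by omega)] at hdiff
  simp only [Function.update_self, add_assoc, Nat.reduceAdd, Function.update_of_ne,
    ne_eq, Nat.ne_add_one, Nat.add_left_cancel_iff, not_false_eq_true,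
    OfNat.ofNat_ne_one] at hdiff
  linarith

theorem cell_eq_iff_next_cell_eq (h : IsOptimalQuantizer f lo hi m n c p) (hf : IsDensityOn f lo hi)
    (hmi : m ≤ i) (hin : i + 1 < n) : c i = c (i + 1) ↔ c (i + 1) = c (i + 2) := by
  have hsplit {k : ℕ} (hk : m ≤ k) (hkn : k < n) (hlt : c k < c (k + 1)) :=
    (hf.mono (h.isPartition.lo_le hk hkn.le)
      (h.isPartition.le_hi (by omega) hkn)).exists_split_cellMoment_two_lt hlt (p k)
  constructor <;> intro heq <;> by_contra hne
  · obtain ⟨t, ht, q, q', hlt⟩ := hsplit (k := i + 1) (by omega) hin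
      (lt_of_le_of_ne (h.isPartition.le_succ _ (by omega) hin) hne)
    have := h.cellMoment_add_le hmi hin (t := t) (heq ▸ ht) q q'
    rw [heq, cellMoment_self] at this
    linarith
  · obtain ⟨t, ht, q, q', hlt⟩ := hsplit (k := i) hmi (by omega)
      (lt_of_le_of_ne (h.isPartition.le_succ _ hmi (by omega)) hne)
    have := h.cellMoment_add_le hmi hin (t := t) (heq ▸ ht) q q'
    rw [← heq, cellMoment_self] at this
    linarith

theorem lt_succ (h : IsOptimalQuantizer f lo hi m n c p) (hf : IsDensityOn f lo hi)
    (hlh : lo < hi) (hmi : m ≤ i) (hin : i < n) : c i < c (i + 1) := by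
  have hiff {k : ℕ} (hmk : m ≤ k) (hkn : k < n) : c k = c (k + 1) ↔ c m = c (m + 1) := by
    induction k, hmk using Nat.le_induction with
    | base => rfl
    | succ k hmk ih => rw [← ih (by omega), h.cell_eq_iff_next_cell_eq hf hmk hkn]
  refine lt_of_le_of_ne (h.isPartition.le_succ i hmi hin) fun heq => hlh.ne ?_
  have hconst {k : ℕ} (hmk : m ≤ k) (hkn : k ≤ n) : c m = c k := by
    induction k, hmk using Nat.le_induction with
    | base => rfl
    | succ k hmk ih =>
      rw [ih (by omega), (hiff hmk hkn).mpr ((hiff hmi hin).mp heq)]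
  rw [← h.isPartition.first, ← h.isPartition.last, hconst (by omega) le_rfl]

theorem strictMono (h : IsOptimalQuantizer f lo hi m n c p) (hf : IsDensityOn f lo hi)
    (hlh : lo < hi) (hmi : m ≤ i) (hij : i < j) (hjn : j ≤ n) : c i < c j :=
  (h.lt_succ hf hlh hmi (by omega)).trans_le (h.isPartition.mono (by omega) hij hjn)

theorem isDensityOn_cell (h : IsOptimalQuantizer f lo hi m n c p) (hf : IsDensityOn f lo hi)
    (hmi : m ≤ i) (hin : i < n) : IsDensityOn f (c i) (c (i + 1)) :=
  hf.mono (h.isPartition.lo_le hmi hin.le) (h.isPartition.le_hi (by omega) hin)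

theorem centroid (h : IsOptimalQuantizer f lo hi m n c p) (hf : IsDensityOn f lo hi)
    (hlh : lo < hi) (hmi : m ≤ i) (hin : i < n) :
    cellMoment f 1 (c i) (c (i + 1)) (p i) = 0 := by
  have hcell := h.isDensityOn_cell hf hmi hin
  have hlt := h.lt_succ hf hlh hmi hin
  obtain ⟨q, hq⟩ := hcell.exists_centroid hlt
  have hle := h.cellMoment_le hmi hin q
  rw [cellMoment_two_eq_add_of_centroid hf.locallyIntegrable hq, add_le_iff_nonpos_right,
    mul_nonpos_iff_pos_imp_nonpos] at hle
  have hsq : (p i - q) ^ 2 = 0 :=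
    le_antisymm (by grind [hcell.integral_pos hlt]) (sq_nonneg _)
  rwa [sub_eq_zero.mp (pow_eq_zero_iff two_ne_zero |>.mp hsq)]

theorem point_mem_Ioo (h : IsOptimalQuantizer f lo hi m n c p) (hf : IsDensityOn f lo hi)
    (hlh : lo < hi) (hmi : m ≤ i) (hin : i < n) : p i ∈ Ioo (c i) (c (i + 1)) :=
  (h.isDensityOn_cell hf hmi hin).centroid_mem_Ioo (h.lt_succ hf hlh hmi hin)
    (h.centroid hf hlh hmi hin)

theorem point_lt_point (h : IsOptimalQuantizer f lo hi m n c p) (hf : IsDensityOn f lo hi)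
    (hlh : lo < hi) (hmi : m ≤ i) (hij : i < j) (hjn : j < n) : p i < p j :=
  (h.point_mem_Ioo hf hlh hmi (by omega)).2.trans_le
    ((h.isPartition.mono (by omega) hij hjn.le).trans
      (h.point_mem_Ioo hf hlh (by omega) hjn).1.le)

theorem two_mul_break (h : IsOptimalQuantizer f lo hi m n c p) (hf : IsDensityOn f lo hi)
    (hlh : lo < hi) (hmi : m ≤ i) (hin : i + 1 < n) : 2 * c (i + 1) = p i + p (i + 1) := by
  have hleft := h.point_mem_Ioo hf hlh hmi (by omega)
  have hright := h.point_mem_Ioo hf hlh (i := i + 1) (by omega) hin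
  have hloc := hf.locallyIntegrable
  have hdens := (h.isDensityOn_cell hf hmi (by omega)).mono hleft.1.le le_rfl
  have hdens' := (h.isDensityOn_cell hf (i := i + 1) (by omega) hin).mono le_rfl hright.2.le
  obtain ⟨t, ht⟩ : ∃ t, 2 * t = p i + p (i + 1) := ⟨(p i + p (i + 1)) / 2, by ring⟩
  have hle := h.cellMoment_add_le hmi hin (t := t)
    ⟨by linarith [hleft.1, hleft.2, hright.1], by linarith [hleft.2, hright.1, hright.2]⟩
    (p i) (p (i + 1))
  have hshift := cellMoment_two_sub hloc (c (i + 1)) t (p i) (p (i + 1))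
  rw [← ht, mul_div_cancel_left₀ t two_ne_zero] at hshift
  have hnonneg : 0 ≤ cellMoment f 1 (c (i + 1)) t t := by
    have := cellMoment_add hloc 2 (c i) (c (i + 1)) t (p i)
    have := cellMoment_add hloc 2 (c (i + 1)) t (c (i + 2)) (p (i + 1))
    have : p i < p (i + 1) := hleft.2.trans hright.1
    nlinarith
  rw [← ht]
  rcases lt_trichotomy (c (i + 1)) t with hlt | heq | hgt
  · refine absurd ((hdens'.mono le_rfl ?_).cellMoment_one_neg hlt le_rfl) hnonneg.not_gt
    linarith [hleft.2, hright.1]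
  · rw [heq]
  · have hpos := (hdens.mono (a' := t) (by linarith [hleft.2, hright.1]) le_rfl).cellMoment_pos
      1 hgt le_rfl
    have := cellMoment_add hloc 1 (c (i + 1)) t (c (i + 1)) t
    rw [cellMoment_self] at this
    linarith

theorem reflect (h : IsOptimalQuantizer f lo hi 0 n c p) (σ : ℝ) :
    IsOptimalQuantizer (fun x => f (σ - x)) (σ - hi) (σ - lo) 0 n
      (fun i => σ - c (n - i)) (fun i => σ - p (n - 1 - i)) where
  isPartition := h.isPartition.reflect σ
  cost_le c' p' hc' := by
    rw [quantizerCost_reflect, ← quantizerCost_reflect _ n c' p' σ]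
    simp only [sub_sub_cancel]
    exact h.cost_le _ _ (by simpa only [sub_sub_cancel] using hc'.reflect σ)

theorem shift (h : IsOptimalQuantizer f lo hi m n c p) (d : ℕ) :
    IsOptimalQuantizer f lo hi (m + d) (n + d) (fun i => c (i - d)) (fun i => p (i - d)) where
  isPartition := h.isPartition.shift d
  cost_le c' p' hc' := by
    simp only [quantizerCost_shift, Nat.add_sub_cancel]
    refine h.cost_le _ _ ⟨hc'.first, hc'.last, fun i hmi hin => ?_⟩
    simpa only [add_right_comm] using hc'.le_succ (i + d) (by omega) (by omega)

end IsOptimalQuantizer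

end Quantizer

section Exchange

/-- The sequence `c` with its values at the indices `j < x ≤ i` replaced by those of `c'`. -/
def spliceBreaks (j i : ℕ) (c c' : ℕ → ℝ) (x : ℕ) : ℝ :=
  if j < x ∧ x ≤ i then c' x else c x

/-- The points `p` with those at the indices `j < x < i` replaced by `p'`, and those at the two ends
`j` and `i` merged with `p'` by `F` (which will be `min` or `max`). -/
def splicePoints (F : ℝ → ℝ → ℝ) (j i : ℕ) (p p' : ℕ → ℝ) (x : ℕ) : ℝ :=
  if j < x ∧ x < i then p' x else if x = j ∨ x = i then F (p x) (p' x) else p x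

/-- The `i`-th cell of `c` is contained in the `i`-th cell of `c'`. -/
def NestedAt (c c' : ℕ → ℝ) (i : ℕ) : Prop := c' i ≤ c i ∧ c (i + 1) ≤ c' (i + 1)

variable {f : ℝ → ℝ} {F : ℝ → ℝ → ℝ} {lo hi : ℝ} {m n m' n' i j x : ℕ} {c p c' p' : ℕ → ℝ}

theorem spliceBreaks_of_mem (hjx : j < x) (hxi : x ≤ i) : spliceBreaks j i c c' x = c' x :=
  if_pos ⟨hjx, hxi⟩

theorem spliceBreaks_of_notMem (h : x ≤ j ∨ i < x) : spliceBreaks j i c c' x = c x :=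
  if_neg (by omega)

theorem splicePoints_of_mem (hjx : j < x) (hxi : x < i) : splicePoints F j i p p' x = p' x :=
  if_pos ⟨hjx, hxi⟩

theorem splicePoints_of_end (h : x = j ∨ x = i) :
    splicePoints F j i p p' x = F (p x) (p' x) := by
  rw [splicePoints, if_neg (by omega), if_pos h]

theorem splicePoints_of_notMem (hji : j < i) (h : x < j ∨ i < x) :
    splicePoints F j i p p' x = p x := by
  rw [splicePoints, if_neg (by omega), if_neg (by omega)]

theorem IsPartition.spliceBreaks (h : IsPartition lo hi m n c) (h' : IsPartition lo hi m' n' c')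
    (hmj : m ≤ j) (hmj' : m' ≤ j) (hji : j < i) (hin : i < n) (hin' : i < n')
    (hcj : c j ≤ c' (j + 1)) (hci : c' i ≤ c (i + 1)) :
    IsPartition lo hi m n (spliceBreaks j i c c') where
  first := by rw [spliceBreaks_of_notMem (by omega), h.first]
  last := by rw [spliceBreaks_of_notMem (by omega), h.last]
  le_succ x hmx hxn := by
    have := h.le_succ x hmx hxn
    have (hx : m' ≤ x) (hx' : x < n') := h'.le_succ x hx hx'
    unfold _root_.spliceBreaks
    grind

theorem quantizerCost_splice_sub (f : ℝ → ℝ) (F : ℝ → ℝ → ℝ) (c c' p p' : ℕ → ℝ)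
    (hmj : m ≤ j) (hji : j < i) (hin : i < n) :
    quantizerCost f m n (spliceBreaks j i c c') (splicePoints F j i p p') - quantizerCost f m n c p
      = ∑ x ∈ Finset.Icc j i,
          (cellMoment f 2 (spliceBreaks j i c c' x) (spliceBreaks j i c c' (x + 1))
              (splicePoints F j i p p' x)
            - cellMoment f 2 (c x) (c (x + 1)) (p x)) := by
  refine quantizerCost_sub_eq_sum (fun x hx => ?_) fun x hx => ?_
  · rw [Finset.mem_Icc] at hx
    exact Finset.mem_Ico.mpr (by omega)
  · rw [Finset.mem_Icc] at hx
    exact ⟨spliceBreaks_of_notMem (by omega), spliceBreaks_of_notMem (by omega),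
      splicePoints_of_notMem hji (by omega)⟩

namespace IsOptimalQuantizer

theorem exchange_cellMoment_le (h : IsOptimalQuantizer f lo hi m n c p)
    (h' : IsOptimalQuantizer f lo hi m' n' c' p') (hf : IsDensityOn f lo hi) (hlh : lo < hi)
    (hmi : m ≤ i) (hmi' : m' ≤ i) (hin : i < n) (hin' : i < n') (hnest : NestedAt c c' i) :
    cellMoment f 2 (c' i) (c (i + 1)) (min (p i) (p' i))
        + cellMoment f 2 (c i) (c' (i + 1)) (max (p i) (p' i))
      ≤ cellMoment f 2 (c i) (c (i + 1)) (p i) + cellMoment f 2 (c' i) (c' (i + 1)) (p' i) := by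
  rw [min_comm, max_comm, add_comm (cellMoment f 2 (c i) (c (i + 1)) (p i))]
  exact (h'.isDensityOn_cell hf hmi' hin').exchange_nested_cells hnest.1
    (h.isPartition.le_succ i hmi hin) hnest.2
    (Ioo_subset_Icc_self (h.point_mem_Ioo hf hlh hmi hin)) (p' i)

theorem splice_cellMoment_le (h : IsOptimalQuantizer f lo hi m n c p)
    (h' : IsOptimalQuantizer f lo hi m' n' c' p') (hf : IsDensityOn f lo hi) (hlh : lo < hi)
    (hmj : m ≤ j) (hmj' : m' ≤ j) (hji : j < i) (hin : i < n) (hin' : i < n')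
    (hnj : NestedAt c c' j) (hni : NestedAt c' c i) (hx : x ∈ Finset.Icc j i) :
    cellMoment f 2 (spliceBreaks j i c c' x) (spliceBreaks j i c c' (x + 1))
          (splicePoints max j i p p' x)
        + cellMoment f 2 (spliceBreaks j i c' c x) (spliceBreaks j i c' c (x + 1))
          (splicePoints min j i p' p x)
      ≤ cellMoment f 2 (c x) (c (x + 1)) (p x) + cellMoment f 2 (c' x) (c' (x + 1)) (p' x) := by
  rw [Finset.mem_Icc] at hx
  rcases hx.1.eq_or_lt with rfl | hjx
  · rw [spliceBreaks_of_notMem (by omega), spliceBreaks_of_mem (by omega) (by omega),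
      spliceBreaks_of_notMem (by omega), spliceBreaks_of_mem (by omega) (by omega),
      splicePoints_of_end (by omega), splicePoints_of_end (by omega), min_comm, add_comm]
    exact h.exchange_cellMoment_le h' hf hlh hmj hmj' (by omega) (by omega) hnj
  rcases hx.2.eq_or_lt with rfl | hxi
  · rw [spliceBreaks_of_mem (by omega) (by omega), spliceBreaks_of_notMem (by omega),
      spliceBreaks_of_mem (by omega) (by omega), spliceBreaks_of_notMem (by omega),
      splicePoints_of_end (by omega), splicePoints_of_end (by omega), max_comm, add_comm]
    exact (h'.exchange_cellMoment_le h hf hlh (by omega) (by omega) hin' hin hni).trans_eq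
      (add_comm _ _)
  · rw [spliceBreaks_of_mem (by omega) (by omega), spliceBreaks_of_mem (by omega) (by omega),
      spliceBreaks_of_mem (by omega) (by omega), spliceBreaks_of_mem (by omega) (by omega),
      splicePoints_of_mem hjx hxi, splicePoints_of_mem hjx hxi, add_comm]

/- If the cells of `c` and `c'` are nested one way at `j` and the other way at `i`, exchanging
everything between `j` and `i` does not raise the total cost, so neither cost can change. -/
theorem splice (h : IsOptimalQuantizer f lo hi m n c p)
    (h' : IsOptimalQuantizer f lo hi m' n' c' p') (hf : IsDensityOn f lo hi) (hlh : lo < hi)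
    (hmj : m ≤ j) (hmj' : m' ≤ j) (hji : j < i) (hin : i < n) (hin' : i < n')
    (hnj : NestedAt c c' j) (hni : NestedAt c' c i) :
    IsOptimalQuantizer f lo hi m n (spliceBreaks j i c c') (splicePoints max j i p p') ∧
      IsOptimalQuantizer f lo hi m' n' (spliceBreaks j i c' c) (splicePoints min j i p' p) := by
  have hpart := h.isPartition.spliceBreaks h'.isPartition hmj hmj' hji hin hin'
    ((h.isPartition.le_succ j hmj (by omega)).trans hnj.2)
    ((h'.isPartition.le_succ i (by omega) hin').trans hni.2)
  have hpart' := h'.isPartition.spliceBreaks h.isPartition hmj' hmj hji hin' hin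
    (hnj.1.trans (h.isPartition.le_succ j hmj (by omega)))
    (hni.1.trans (h'.isPartition.le_succ i (by omega) hin'))
  have htotal :
      (quantizerCost f m n (spliceBreaks j i c c') (splicePoints max j i p p')
          - quantizerCost f m n c p)
        + (quantizerCost f m' n' (spliceBreaks j i c' c) (splicePoints min j i p' p)
          - quantizerCost f m' n' c' p') ≤ 0 := by
    rw [quantizerCost_splice_sub f max c c' p p' hmj hji hin,
      quantizerCost_splice_sub f min c' c p' p hmj' hji hin', ← Finset.sum_add_distrib]
    exact Finset.sum_nonpos fun x hx => by
      linarith [h.splice_cellMoment_le h' hf hlh hmj hmj' hji hin hin' hnj hni hx]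
  have hle := h.cost_le _ (splicePoints max j i p p') hpart
  have hle' := h'.cost_le _ (splicePoints min j i p' p) hpart'
  exact ⟨⟨hpart, fun x y hx => by linarith [h.cost_le x y hx]⟩,
    ⟨hpart', fun x y hx => by linarith [h'.cost_le x y hx]⟩⟩

theorem splice_centroid_min (h : IsOptimalQuantizer f lo hi m n c p)
    (h' : IsOptimalQuantizer f lo hi m' n' c' p') (hf : IsDensityOn f lo hi) (hlh : lo < hi)
    (hmj : m ≤ j) (hmj' : m' ≤ j) (hji : j < i) (hin : i < n) (hin' : i < n')
    (hnj : NestedAt c c' j) (hni : NestedAt c' c i) :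
    c i < c' (i + 1) ∧ cellMoment f 1 (c i) (c' (i + 1)) (min (p' i) (p i)) = 0 := by
  obtain ⟨-, hopt⟩ := h.splice h' hf hlh hmj hmj' hji hin hin' hnj hni
  have hlt := hopt.lt_succ hf hlh (i := i) (by omega) hin'
  have hcen := hopt.centroid hf hlh (i := i) (by omega) hin'
  rw [spliceBreaks_of_mem hji le_rfl, spliceBreaks_of_notMem (by omega)] at hlt hcen
  rw [splicePoints_of_end (by omega)] at hcen
  exact ⟨hlt, hcen⟩

theorem point_le_of_nestedAt (h : IsOptimalQuantizer f lo hi m n c p)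
    (h' : IsOptimalQuantizer f lo hi m' n' c' p') (hf : IsDensityOn f lo hi) (hlh : lo < hi)
    (hmj : m ≤ j) (hmj' : m' ≤ j) (hji : j < i) (hin : i < n) (hin' : i < n')
    (hnj : NestedAt c c' j) (hni : NestedAt c' c i) : p i ≤ p' i := by
  by_contra! hlt
  obtain ⟨hopt, -⟩ := h.splice h' hf hlh hmj hmj' hji hin hin' hnj hni
  have hbreak : c i = c' i := by
    obtain ⟨hlt', hcen⟩ := h.splice_centroid_min h' hf hlh hmj hmj' hji hin hin' hnj hni
    rw [min_eq_left hlt.le] at hcen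
    by_contra hne
    refine (IsDensityOn.centroid_lt_centroid (hf.mono ?_ ?_) hlt'
      (h'.lt_succ hf hlh (by omega) hin') hni.1 le_rfl (Or.inl (lt_of_le_of_ne hni.1 hne)) hcen
      (h'.centroid hf hlh (by omega) hin')).ne rfl
    · exact h.isPartition.lo_le (by omega) hin.le
    · exact h'.isPartition.le_hi (by omega) hin'
  obtain ⟨i, rfl⟩ : ∃ i₀, i = i₀ + 1 := ⟨i - 1, by omega⟩
  have hmid := h.two_mul_break hf hlh (i := i) (by omega) hin
  have hmid' := h'.two_mul_break hf hlh (i := i) (by omega) hin'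
  have hmidS := hopt.two_mul_break hf hlh (i := i) (by omega) hin
  have hprev : splicePoints max j (i + 1) p p' i = p' i := by
    rcases (show j ≤ i by omega).eq_or_lt with rfl | hjlt
    · rw [splicePoints_of_end (by omega), max_eq_right (by linarith)]
    · exact splicePoints_of_mem hjlt (by omega)
  rw [spliceBreaks_of_mem hji le_rfl, hprev, splicePoints_of_end (by omega),
    max_eq_left hlt.le] at hmidS
  linarith

theorem break_succ_eq_of_nestedAt (h : IsOptimalQuantizer f lo hi m n c p)
    (h' : IsOptimalQuantizer f lo hi m' n' c' p') (hf : IsDensityOn f lo hi) (hlh : lo < hi)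
    (hmj : m ≤ j) (hmj' : m' ≤ j) (hji : j < i) (hin : i < n) (hin' : i < n')
    (hnj : NestedAt c c' j) (hni : NestedAt c' c i) : c' (i + 1) = c (i + 1) := by
  obtain ⟨hlt, hcen⟩ := h.splice_centroid_min h' hf hlh hmj hmj' hji hin hin' hnj hni
  rw [min_eq_right (h.point_le_of_nestedAt h' hf hlh hmj hmj' hji hin hin' hnj hni)] at hcen
  by_contra hne
  exact ((h.isDensityOn_cell hf (by omega) hin).centroid_lt_centroid hlt
    (h.lt_succ hf hlh (by omega) hin) le_rfl hni.2 (Or.inr (lt_of_le_of_ne hni.2 hne)) hcen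
    (h.centroid hf hlh (by omega) hin)).ne rfl

theorem break_eq_of_nestedAt (h : IsOptimalQuantizer f lo hi m n c p)
    (h' : IsOptimalQuantizer f lo hi m' n' c' p') (hf : IsDensityOn f lo hi) (hlh : lo < hi)
    (hmj : m ≤ j) (hmj' : m' ≤ j) (hji : j < i) (hin : i + 1 < n) (hin' : i + 1 < n')
    (hnj : NestedAt c c' j) (hni : NestedAt c' c i) : c i = c' i := by
  have hin₀ : i < n := by omega
  have hin₀' : i < n' := by omega
  have hpp := h.point_le_of_nestedAt h' hf hlh hmj hmj' hji hin₀ hin₀' hnj hni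
  have hsucc := h.break_succ_eq_of_nestedAt h' hf hlh hmj hmj' hji hin₀ hin₀' hnj hni
  obtain ⟨-, hopt⟩ := h.splice h' hf hlh hmj hmj' hji hin₀ hin₀' hnj hni
  have hmid' := h'.two_mul_break hf hlh (i := i) (by omega) hin'
  have hmidS := hopt.two_mul_break hf hlh (i := i) (by omega) hin'
  rw [spliceBreaks_of_notMem (by omega), splicePoints_of_end (by omega), min_eq_right hpp,
    splicePoints_of_notMem hji (by omega)] at hmidS
  have hpeq : p i = p' i := by linarith
  by_contra hne
  refine (IsDensityOn.centroid_lt_centroid (hf.mono ?_ ?_) (h.lt_succ hf hlh (by omega) hin₀)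
    (h'.lt_succ hf hlh (by omega) hin₀') hni.1 hsucc.ge (Or.inl (lt_of_le_of_ne hni.1 hne))
    (h.centroid hf hlh (by omega) hin₀) (h'.centroid hf hlh (by omega) hin₀')).ne hpeq
  · exact h.isPartition.lo_le (by omega) hin₀.le
  · exact h'.isPartition.le_hi (by omega) hin₀'

end IsOptimalQuantizer

end Exchange

section Interlacing

variable {f : ℝ → ℝ} {lo hi : ℝ} {m n m' n' i : ℕ} {c p c' p' : ℕ → ℝ}

theorem exists_not_and_succ (Q : ℕ → Prop) {a b : ℕ} (hab : a ≤ b) (ha : ¬ Q a) (hb : Q b) :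
    ∃ j, a ≤ j ∧ j < b ∧ ¬ Q j ∧ Q (j + 1) := by
  induction b, hab using Nat.le_induction with
  | base => exact absurd hb ha
  | succ k hk ih => grind

namespace IsOptimalQuantizer

theorem break_le_of_last_lt (h : IsOptimalQuantizer f lo hi m n c p)
    (h' : IsOptimalQuantizer f lo hi m' n' c' p') (hf : IsDensityOn f lo hi) (hlh : lo < hi)
    (hm : m' ≤ m) (hn : n' < n) (hmi : m ≤ i) (hin : i ≤ n') : c i ≤ c' i := by
  by_contra! hlt
  have hfirst : ¬ c' m < c m := not_lt.mpr
    (h.isPartition.first.trans_le (h'.isPartition.lo_le hm (by omega)))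
  have hlast : c n' ≤ c' n' :=
    (h.isPartition.le_hi (by omega) hn.le).trans_eq h'.isPartition.last.symm
  obtain ⟨j, hmj, hji, hj, hj'⟩ :=
    exists_not_and_succ (fun x => c' x < c x) hmi hfirst hlt
  obtain ⟨k, hik, hkn, hk, hk'⟩ :=
    exists_not_and_succ (fun x => c x ≤ c' x) hin hlt.not_ge hlast
  rw [not_lt] at hj
  rw [not_le] at hk
  have hsucc := h'.break_succ_eq_of_nestedAt h hf hlh (i := k) (j := j) (by omega) hmj
    (by omega) (by omega) (by omega) ⟨hj, hj'.le⟩ ⟨hk.le, hk'⟩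
  rcases (show k + 1 ≤ n' by omega).eq_or_lt with rfl | hlt'
  · have := h.strictMono hf hlh (i := k + 1) (by omega) hn le_rfl
    rw [h.isPartition.last, hsucc, h'.isPartition.last] at this
    exact this.false
  · exact hk.ne (h'.break_eq_of_nestedAt h hf hlh (by omega) hmj (by omega) hlt' (by omega)
      ⟨hj, hj'.le⟩ ⟨hk.le, hk'⟩)

theorem break_lt_of_first_lt_of_last_lt (h : IsOptimalQuantizer f lo hi m n c p)
    (h' : IsOptimalQuantizer f lo hi m' n' c' p') (hf : IsDensityOn f lo hi) (hlh : lo < hi)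
    (hm : m' < m) (hn : n' < n) (hmi : m ≤ i) (hin : i ≤ n') : c i < c' i := by
  by_contra! hle
  have hfirst : ¬ c' m ≤ c m := not_le.mpr <| by
    rw [h.isPartition.first, ← h'.isPartition.first]
    exact h'.strictMono hf hlh le_rfl hm (by omega)
  have hlast : c n' < c' n' := by
    rw [h'.isPartition.last, ← h.isPartition.last]
    exact h.strictMono hf hlh (by omega) hn le_rfl
  obtain ⟨j, hmj, hji, hj, hj'⟩ :=
    exists_not_and_succ (fun x => c' x ≤ c x) hmi hfirst hle
  obtain ⟨k, hik, hkn, hk, hk'⟩ :=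
    exists_not_and_succ (fun x => c x < c' x) hin hle.not_gt hlast
  rw [not_le] at hj
  rw [not_lt] at hk
  exact hk'.ne (h'.break_succ_eq_of_nestedAt h hf hlh (i := k) (j := j) (by omega) hmj
    (by omega) (by omega) (by omega) ⟨hj.le, hj'⟩ ⟨hk, hk'.le⟩)

theorem break_lt_break_succ (h : IsOptimalQuantizer f lo hi 0 n c p)
    (h' : IsOptimalQuantizer f lo hi 0 n c' p') (hf : IsDensityOn f lo hi) (hlh : lo < hi)
    (hin : i < n) : c i < c' (i + 1) := by
  simpa using (h.shift 1).break_lt_of_first_lt_of_last_lt h' hf hlh (i := i + 1) (by omega)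
    (by omega) (by omega) (by omega)

theorem point_lt_point_succ (h : IsOptimalQuantizer f lo hi 0 n c p)
    (h' : IsOptimalQuantizer f lo hi 0 n c' p') (hf : IsDensityOn f lo hi) (hlh : lo < hi)
    (hin : i + 1 < n) : p i < p' (i + 1) := by
  have hlt := h.break_lt_break_succ h' hf hlh (i := i) (by omega)
  exact IsDensityOn.centroid_lt_centroid
    (hf.mono (h.isPartition.lo_le (by omega) (by omega)) (h'.isPartition.le_hi (by omega) hin))
    (h.lt_succ hf hlh (by omega) (by omega)) (h'.lt_succ hf hlh (by omega) hin) hlt.le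
    (h.break_lt_break_succ h' hf hlh hin).le (Or.inl hlt)
    (h.centroid hf hlh (by omega) (by omega)) (h'.centroid hf hlh (by omega) hin)

theorem break_le_break (h : IsOptimalQuantizer f lo hi 0 n c p)
    (h' : IsOptimalQuantizer f lo hi 0 n' c' p') (hf : IsDensityOn f lo hi) (hlh : lo < hi)
    (hn : n < n') (hin : i ≤ n) : c' i ≤ c i :=
  h'.break_le_of_last_lt h hf hlh le_rfl hn i.zero_le hin

theorem point_le_point (h : IsOptimalQuantizer f lo hi 0 n c p)
    (h' : IsOptimalQuantizer f lo hi 0 n' c' p') (hf : IsDensityOn f lo hi) (hlh : lo < hi)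
    (hn : n < n') (hin : i < n) : p' i ≤ p i :=
  IsDensityOn.centroid_le_centroid
    (hf.mono (h'.isPartition.lo_le (by omega) (by omega)) (h.isPartition.le_hi (by omega) hin))
    (h'.lt_succ hf hlh (by omega) (by omega)) (h.lt_succ hf hlh (by omega) hin)
    (h.break_le_break h' hf hlh hn hin.le) (h.break_le_break h' hf hlh hn hin)
    (h'.centroid hf hlh (by omega) (by omega)) (h.centroid hf hlh (by omega) hin)

theorem break_le_break_add (h : IsOptimalQuantizer f lo hi 0 n c p)
    (h' : IsOptimalQuantizer f lo hi 0 n' c' p') (hf : IsDensityOn f lo hi) (hlh : lo < hi)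
    (hn : n < n') (hin : i ≤ n) : c i ≤ c' (i + (n' - n)) := by
  have := (h.reflect (lo + hi)).break_le_break (h'.reflect (lo + hi))
    (hf.reflect (lo + hi)) (by linarith) hn (i := n - i) (by omega)
  simp only [show n - (n - i) = i by omega,
    show n' - (n - i) = i + (n' - n) by omega] at this
  linarith

theorem point_le_point_add (h : IsOptimalQuantizer f lo hi 0 n c p)
    (h' : IsOptimalQuantizer f lo hi 0 n' c' p') (hf : IsDensityOn f lo hi) (hlh : lo < hi)
    (hn : n < n') (hin : i < n) : p i ≤ p' (i + (n' - n)) := by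
  have := (h.reflect (lo + hi)).point_le_point (h'.reflect (lo + hi))
    (hf.reflect (lo + hi)) (by linarith) hn (i := n - 1 - i) (by omega)
  simp only [show n - 1 - (n - 1 - i) = i by omega,
    show n' - 1 - (n - 1 - i) = i + (n' - n) by omega] at this
  linarith

end IsOptimalQuantizer

end Interlacing

section Distortion

/-- The squared distance from `x` to the set `α`, i.e. the integrand of `distortion`. -/
noncomputable def minSqDist (α : Set ℝ) (x : ℝ) : ℝ :=
  sInf ((fun a => (x - a) ^ 2) '' α)

/-- `Q` is the measure with density `f`, and `f` vanishes off `[lo, hi]`. -/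
structure HasDensityOn (Q : Measure ℝ) (f : ℝ → ℝ) (lo hi : ℝ) : Prop where
  eq_withDensity : Q = volume.withDensity fun x => ENNReal.ofReal (f x)
  measurable : Measurable f
  locallyIntegrable : LocallyIntegrable f
  nonneg : ∀ x, 0 ≤ f x
  eq_zero : ∀ x ∉ Icc lo hi, f x = 0

variable {Q : Measure ℝ} {f : ℝ → ℝ} {lo hi a x v : ℝ} {n i : ℕ} {c p : ℕ → ℝ} {α : Set ℝ}

theorem continuous_minSqDist (hα : α.Finite) (hne : α.Nonempty) : Continuous (minSqDist α) := by
  have hne' : hα.toFinset.Nonempty := hα.toFinset_nonempty.mpr hne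
  have hinf : minSqDist α = fun x => hα.toFinset.inf' hne' fun a => (x - a) ^ 2 := by
    ext x
    rw [Finset.inf'_eq_csInf_image, hα.coe_toFinset, minSqDist]
  rw [hinf]
  exact Continuous.finset_inf'_apply hne' fun a _ => by fun_prop

theorem minSqDist_le (ha : a ∈ α) (x : ℝ) : minSqDist α x ≤ (x - a) ^ 2 :=
  csInf_le ⟨0, forall_mem_image.mpr fun _ _ => sq_nonneg _⟩ (mem_image_of_mem _ ha)

theorem le_minSqDist (hne : α.Nonempty) (h : ∀ a ∈ α, v ≤ (x - a) ^ 2) : v ≤ minSqDist α x :=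
  le_csInf (hne.image _) (forall_mem_image.mpr h)

theorem quantErr_le_distortion (Q : Measure ℝ) (hα : α.Finite) (hne : α.Nonempty)
    (hcard : α.ncard ≤ n) : quantErr Q n ≤ distortion Q α := by
  refine csInf_le ⟨0, ?_⟩ ⟨α, hα, hne, hcard, rfl⟩
  rintro _ ⟨β, _, _, _, rfl⟩
  exact integral_nonneg fun x => Real.sInf_nonneg (forall_mem_image.mpr fun _ _ => sq_nonneg _)

namespace HasDensityOn

theorem distortion_eq_integral (hQ : HasDensityOn Q f lo hi) (hlh : lo ≤ hi) (α : Set ℝ) :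
    distortion Q α = ∫ x in lo..hi, minSqDist α x * f x := by
  rw [distortion, hQ.eq_withDensity, integral_withDensity_eq_integral_toReal_smul
      hQ.measurable.ennreal_ofReal (.of_forall fun _ => ENNReal.ofReal_lt_top),
    intervalIntegral.integral_of_le hlh, ← integral_Icc_eq_integral_Ioc,
    setIntegral_eq_integral_of_forall_compl_eq_zero fun x hx => by rw [hQ.eq_zero x hx, mul_zero]]
  refine integral_congr_ae (.of_forall fun x => ?_)
  simp only [ENNReal.toReal_ofReal (hQ.nonneg x), smul_eq_mul, mul_comm (f x), minSqDist]

theorem intervalIntegrable_minSqDist_mul (hQ : HasDensityOn Q f lo hi) (hα : α.Finite)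
    (hne : α.Nonempty) (a b : ℝ) :
    IntervalIntegrable (fun x => minSqDist α x * f x) volume a b :=
  (hQ.locallyIntegrable.integrableOn_isCompact isCompact_uIcc).intervalIntegrable.continuousOn_mul
    (continuous_minSqDist hα hne).continuousOn

theorem distortion_eq_sum (hQ : HasDensityOn Q f lo hi) (hlh : lo ≤ hi) (hα : α.Finite)
    (hne : α.Nonempty) (hc : IsPartition lo hi 0 n c) :
    distortion Q α
      = ∑ i ∈ Finset.Ico 0 n, ∫ x in (c i)..(c (i + 1)), minSqDist α x * f x := by
  rw [hQ.distortion_eq_integral hlh, intervalIntegral.sum_integral_adjacent_intervals_Ico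
    n.zero_le fun i _ => hQ.intervalIntegrable_minSqDist_mul hα hne _ _, hc.first, hc.last]

theorem quantErr_le_quantizerCost (hQ : HasDensityOn Q f lo hi) (hlh : lo ≤ hi) (hn : 1 ≤ n)
    (hc : IsPartition lo hi 0 n c) (p : ℕ → ℝ) : quantErr Q n ≤ quantizerCost f 0 n c p := by
  have hfin : (p '' Iio n).Finite := (finite_Iio n).image p
  have hne : (p '' Iio n).Nonempty := ⟨p 0, mem_image_of_mem p hn⟩
  have hcard : (p '' Iio n).ncard ≤ n := by
    simpa using ncard_image_le (f := p) (finite_Iio n)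
  refine (quantErr_le_distortion Q hfin hne hcard).trans ?_
  rw [hQ.distortion_eq_sum hlh hfin hne hc]
  refine Finset.sum_le_sum fun i hi => ?_
  have hin : i < n := (Finset.mem_Ico.mp hi).2
  exact intervalIntegral.integral_mono_on (hc.le_succ i i.zero_le hin)
    (hQ.intervalIntegrable_minSqDist_mul hfin hne _ _)
    (intervalIntegrable_sub_pow_mul hQ.locallyIntegrable 2 _ _ _) fun x _ =>
    mul_le_mul_of_nonneg_right (minSqDist_le (mem_image_of_mem p (mem_Iio.mpr hin)) x) (hQ.nonneg x)

end HasDensityOn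

theorem exists_monotone_image_Iio_eq (hα : α.Finite) (hpos : 1 ≤ α.ncard) (hn : α.ncard ≤ n) :
    ∃ p : ℕ → ℝ, Monotone p ∧ p '' Iio n = α := by
  have hcard : hα.toFinset.card = α.ncard := (ncard_eq_toFinset_card α hα).symm
  let e := hα.toFinset.orderEmbOfFin hcard
  have hrange : range e = α := by
    rw [Finset.range_orderEmbOfFin, hα.coe_toFinset]
  refine ⟨fun i => e ⟨min i (α.ncard - 1), by omega⟩,
    fun i j hij => e.monotone (Fin.mk_le_mk.mpr (by omega)), ?_⟩
  refine Subset.antisymm (image_subset_iff.mpr fun i _ => ?_) fun x hx => ?_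
  · exact hrange.subset (mem_range_self _)
  · obtain ⟨j, rfl⟩ := hrange.superset hx
    exact ⟨j, mem_Iio.mpr (by omega), congrArg e (Fin.ext (min_eq_left (by omega)))⟩

/-- The end points of the Voronoi cells in `[lo, hi]` of the points `p 0 ≤ ⋯ ≤ p (n - 1)`: the
midpoints of neighbouring points, truncated to `[lo, hi]`. -/
noncomputable def voronoiBreaks (lo hi : ℝ) (n : ℕ) (p : ℕ → ℝ) (i : ℕ) : ℝ :=
  if i = 0 then lo else if n ≤ i then hi else max lo (min hi ((p (i - 1) + p i) / 2))

theorem voronoiBreaks_of_lt (hi0 : 0 < i) (hin : i < n) :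
    voronoiBreaks lo hi n p i = max lo (min hi ((p (i - 1) + p i) / 2)) := by
  rw [voronoiBreaks, if_neg hi0.ne', if_neg hin.not_ge]

theorem voronoiBreaks_mem_Icc (hlh : lo ≤ hi) (i : ℕ) : voronoiBreaks lo hi n p i ∈ Icc lo hi := by
  unfold voronoiBreaks
  split_ifs
  exacts [left_mem_Icc.mpr hlh, right_mem_Icc.mpr hlh,
    ⟨le_max_left _ _, max_le hlh (min_le_left _ _)⟩]

theorem isPartition_voronoiBreaks (hlh : lo ≤ hi) (hn : 1 ≤ n) (hp : Monotone p) :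
    IsPartition lo hi 0 n (voronoiBreaks lo hi n p) where
  first := if_pos rfl
  last := by rw [voronoiBreaks, if_neg (by omega), if_pos le_rfl]
  le_succ i _ hin := by
    rcases Nat.eq_zero_or_pos i with rfl | hi0
    · exact (voronoiBreaks_mem_Icc hlh 1).1
    · rcases (show i + 1 ≤ n from hin).eq_or_lt with hlast | hlt
      · rw [voronoiBreaks.eq_def lo hi n p (i + 1), if_neg (by omega), if_pos hlast.ge]
        exact (voronoiBreaks_mem_Icc hlh i).2
      · rw [voronoiBreaks_of_lt hi0 hin, voronoiBreaks_of_lt i.succ_pos hlt]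
        have := hp (show i - 1 ≤ i + 1 - 1 by omega)
        have := hp (show i ≤ i + 1 by omega)
        gcongr

theorem sq_sub_le_of_mem_voronoi_cell (hlh : lo ≤ hi) (hp : Monotone p) {i j : ℕ} (hin : i < n)
    (hjn : j < n) (hx : x ∈ Ioo (voronoiBreaks lo hi n p i) (voronoiBreaks lo hi n p (i + 1))) :
    (x - p i) ^ 2 ≤ (x - p j) ^ 2 := by
  have hxlo : lo < x := (voronoiBreaks_mem_Icc hlh i).1.trans_lt hx.1
  have hxhi : x < hi := hx.2.trans_le (voronoiBreaks_mem_Icc hlh (i + 1)).2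
  rcases lt_trichotomy j i with hji | rfl | hij
  · have hmid : (p (i - 1) + p i) / 2 < x := by
      have := hx.1
      rw [voronoiBreaks_of_lt (by omega) hin, max_lt_iff, min_lt_iff] at this
      exact this.2.resolve_left hxhi.not_gt
    have := hp (show j ≤ i - 1 by omega)
    have := hp hji.le
    nlinarith
  · exact le_rfl
  · have hmid : x < (p i + p (i + 1)) / 2 := by
      have := hx.2
      rw [voronoiBreaks_of_lt i.succ_pos (by omega), lt_max_iff, lt_min_iff] at this
      exact (this.resolve_left hxlo.not_gt).2
    have := hp (show i + 1 ≤ j from hij)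
    have := hp hij.le
    nlinarith

namespace HasDensityOn

theorem quantizerCost_voronoiBreaks_le (hQ : HasDensityOn Q f lo hi) (hlh : lo ≤ hi) (hn : 1 ≤ n)
    (hp : Monotone p) :
    quantizerCost f 0 n (voronoiBreaks lo hi n p) p ≤ distortion Q (p '' Iio n) := by
  have hfin : (p '' Iio n).Finite := (finite_Iio n).image p
  have hne : (p '' Iio n).Nonempty := ⟨p 0, mem_image_of_mem p hn⟩
  have hpart := isPartition_voronoiBreaks hlh hn hp
  rw [hQ.distortion_eq_sum hlh hfin hne hpart]
  refine Finset.sum_le_sum fun i hi => ?_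
  have hin : i < n := (Finset.mem_Ico.mp hi).2
  refine intervalIntegral.integral_mono_on_of_le_Ioo (hpart.le_succ i i.zero_le hin)
    (intervalIntegrable_sub_pow_mul hQ.locallyIntegrable 2 _ _ _)
    (hQ.intervalIntegrable_minSqDist_mul hfin hne _ _) fun x hx =>
    mul_le_mul_of_nonneg_right (le_minSqDist hne ?_) (hQ.nonneg x)
  exact forall_mem_image.mpr fun j hjn => sq_sub_le_of_mem_voronoi_cell hlh hp hin hjn hx

theorem exists_isOptimalQuantizer (hQ : HasDensityOn Q f lo hi) (hlh : lo ≤ hi)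
    (hα : IsOptimal Q n α) :
    ∃ c p, IsOptimalQuantizer f lo hi 0 n c p ∧ p '' Iio n = α := by
  obtain ⟨hfin, hpos, hcard, hopt⟩ := hα
  obtain ⟨p, hp, rfl⟩ := exists_monotone_image_Iio_eq hfin hpos hcard
  have hn : 1 ≤ n := hpos.trans hcard
  refine ⟨_, p, ⟨isPartition_voronoiBreaks hlh hn hp, fun c' p' hc' => ?_⟩, rfl⟩
  exact (hQ.quantizerCost_voronoiBreaks_le hlh hn hp).trans
    (hopt.trans_le (hQ.quantErr_le_quantizerCost hlh hn hc' p'))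

end HasDensityOn

end Distortion

section MixedDensity

variable {a b x : ℝ}

theorem measurable_f2 : Measurable f2 :=
  .ite (measurableSet_Icc.union measurableSet_Icc) measurable_const
    (.ite measurableSet_Ioo measurable_const measurable_const)

theorem f2_of_mem_left (hx : x ∈ Icc 0 (1 / 2)) : f2 x = 1 / 2 :=
  if_pos (.inl hx)

theorem f2_of_mem_middle (hx : x ∈ Ioo (1 / 2) 1) : f2 x = 1 := by
  rw [f2, if_neg (by grind), if_pos hx]

theorem f2_nonneg (x : ℝ) : 0 ≤ f2 x := by
  unfold f2
  split_ifs <;> norm_num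

theorem f2_pos (hx : x ∈ Icc 0 (3 / 2)) : 0 < f2 x := by
  unfold f2
  split_ifs <;> grind

theorem f2_eq_zero (hx : x ∉ Icc 0 (3 / 2)) : f2 x = 0 := by
  unfold f2
  split_ifs <;> grind

theorem f2_reflect (x : ℝ) : f2 (3 / 2 - x) = f2 x := by
  unfold f2
  split_ifs <;> grind

theorem locallyIntegrable_f2 : LocallyIntegrable f2 := by
  refine (locallyIntegrable_const (1 : ℝ)).mono measurable_f2.aestronglyMeasurable
    (.of_forall fun x => ?_)
  unfold f2
  split_ifs <;> norm_num

theorem isDensityOn_f2 : IsDensityOn f2 0 (3 / 2) :=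
  ⟨locallyIntegrable_f2, fun _ hx => f2_pos (Ioo_subset_Icc_self hx)⟩

theorem hasDensityOn_P2 : HasDensityOn P2 f2 0 (3 / 2) :=
  ⟨rfl, measurable_f2, locallyIntegrable_f2, f2_nonneg, fun _ => f2_eq_zero⟩

theorem cellMoment_f2_left (ha : 0 ≤ a) (hab : a ≤ b) (hb : b ≤ 1 / 2) (k : ℕ) (p : ℝ) :
    cellMoment f2 k a b p = 1 / 2 * ((b - p) ^ (k + 1) - (a - p) ^ (k + 1)) / (k + 1) :=
  cellMoment_of_eq_const hab
    (fun _ hx => f2_of_mem_left ⟨ha.trans hx.1.le, hx.2.le.trans hb⟩) k p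

theorem cellMoment_f2_middle (ha : 1 / 2 ≤ a) (hab : a ≤ b) (hb : b ≤ 1) (k : ℕ) (p : ℝ) :
    cellMoment f2 k a b p = ((b - p) ^ (k + 1) - (a - p) ^ (k + 1)) / (k + 1) := by
  rw [cellMoment_of_eq_const hab
    (fun _ hx => f2_of_mem_middle ⟨ha.trans_lt hx.1, hx.2.trans_le hb⟩) k p, one_mul]

theorem IsOptimalQuantizer.reflect_f2 {n : ℕ} {c p : ℕ → ℝ}
    (h : IsOptimalQuantizer f2 0 (3 / 2) 0 n c p) :
    IsOptimalQuantizer f2 0 (3 / 2) 0 n (fun i => 3 / 2 - c (n - i))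
      (fun i => 3 / 2 - p (n - 1 - i)) := by
  simpa only [f2_reflect, sub_self, sub_zero] using h.reflect (3 / 2)

end MixedDensity

section Profile

/-- The partition `c` of `[0, 3/2]` with points `p` has `A` cells of half-width `h` to the left of
`1/2`; the cell `A` contains `1/2` and has left half-width `h`; from the point `p A` up to the point
`p R`, where the cell `R` contains `1`, all half-widths are `g`. -/
structure HasProfile (n A R : ℕ) (c p : ℕ → ℝ) (h g : ℝ) : Prop where
  isPartition : IsPartition 0 (3 / 2) 0 n c
  index_lt : A < R
  lt_card : R < n
  break_left : ∀ i ≤ A, c i = 2 * i * h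
  point_left : ∀ i ≤ A, p i = (2 * i + 1) * h
  break_middle : ∀ i, A < i → i ≤ R → c i = (2 * A + 1) * h + (2 * ((i : ℝ) - A) - 1) * g
  point_middle : ∀ i, A < i → i ≤ R → p i = (2 * A + 1) * h + 2 * ((i : ℝ) - A) * g
  half_mem : 1 / 2 ∈ Icc (c A) (c (A + 1))
  one_mem : 1 ∈ Icc (c R) (c (R + 1))

theorem sum_Ico_eq_of_lt_of_lt (F : ℕ → ℝ) {A R n : ℕ} (hAR : A < R) (hRn : R < n) :
    ∑ i ∈ Finset.Ico 0 n, F i = ∑ i ∈ Finset.Ico 0 A, F i + F A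
      + ∑ i ∈ Finset.Ico (A + 1) R, F i + F R + ∑ i ∈ Finset.Ico (R + 1) n, F i := by
  rw [← Finset.sum_Ico_succ_top A.zero_le, Finset.sum_Ico_consecutive F (by omega) hAR,
    ← Finset.sum_Ico_succ_top R.zero_le, Finset.sum_Ico_consecutive F (by omega) hRn]

variable {n A R A' i : ℕ} {c p : ℕ → ℝ} {h g h' g' : ℝ}

namespace HasProfile

theorem cellMoment_left (S : HasProfile n A R c p h g) (hi : i < A) :
    cellMoment f2 2 (c i) (c (i + 1)) (p i) = h ^ 3 / 3 := by
  have hAR := S.index_lt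
  have hRn := S.lt_card
  rw [cellMoment_f2_left (S.isPartition.lo_le i.zero_le (by omega))
      (S.isPartition.le_succ i i.zero_le (by omega))
      ((S.isPartition.mono (Nat.zero_le _) hi (by omega)).trans S.half_mem.1),
    S.break_left i hi.le, S.break_left (i + 1) hi, S.point_left i hi.le]
  push_cast
  ring

theorem cellMoment_middle (S : HasProfile n A R c p h g) (hAi : A < i) (hiR : i < R) :
    cellMoment f2 2 (c i) (c (i + 1)) (p i) = 2 * g ^ 3 / 3 := by
  have hRn := S.lt_card
  rw [cellMoment_f2_middle
      (S.half_mem.2.trans (S.isPartition.mono (Nat.zero_le _) hAi (by omega)))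
      (S.isPartition.le_succ i i.zero_le (by omega))
      ((S.isPartition.mono (Nat.zero_le _) hiR (by omega)).trans S.one_mem.1),
    S.break_middle i hAi hiR.le, S.break_middle (i + 1) (by omega) hiR, S.point_middle i hAi hiR.le]
  push_cast
  ring

theorem cellMoment_half (S : HasProfile n A R c p h g) :
    cellMoment f2 2 (c A) (c (A + 1)) (p A)
      = (h ^ 3 - (1 / 2 - (2 * A + 1) * h) ^ 3 + 2 * g ^ 3) / 6 := by
  have hAR := S.index_lt
  have hRn := S.lt_card
  rw [← cellMoment_add locallyIntegrable_f2 2 _ (1 / 2),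
    cellMoment_f2_left (S.isPartition.lo_le A.zero_le (by omega)) S.half_mem.1 le_rfl,
    cellMoment_f2_middle le_rfl S.half_mem.2
      ((S.isPartition.mono (Nat.zero_le _) hAR (by omega)).trans S.one_mem.1),
    S.break_left A le_rfl, S.point_left A le_rfl, S.break_middle (A + 1) (by omega) hAR]
  push_cast
  ring

theorem cellMoment_one (S : HasProfile n A R c p h g) :
    cellMoment f2 2 (c R) (c (R + 1)) (p R)
      = (1 - p R) ^ 3 / 3 + g ^ 3 / 3 + cellMoment f2 2 1 (c (R + 1)) (p R) := by
  have hAR := S.index_lt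
  have hRn := S.lt_card
  rw [← cellMoment_add locallyIntegrable_f2 2 _ 1,
    cellMoment_f2_middle (S.half_mem.2.trans (S.isPartition.mono (Nat.zero_le _) hAR (by omega)))
      S.one_mem.1 le_rfl,
    S.break_middle R hAR le_rfl, S.point_middle R hAR le_rfl]
  push_cast
  ring

theorem quantizerCost_eq (S : HasProfile n A R c p h g) :
    quantizerCost f2 0 n c p
      = ((2 * A + 1) * h ^ 3 + 4 * ((R : ℝ) - A) * g ^ 3 - (1 / 2 - (2 * A + 1) * h) ^ 3) / 6
        + ((1 - p R) ^ 3 / 3 + cellMoment f2 2 1 (c (R + 1)) (p R)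
          + ∑ i ∈ Finset.Ico (R + 1) n, cellMoment f2 2 (c i) (c (i + 1)) (p i)) := by
  have hAR := S.index_lt
  rw [quantizerCost, sum_Ico_eq_of_lt_of_lt _ hAR S.lt_card,
    Finset.sum_congr rfl fun i hi => S.cellMoment_left (Finset.mem_Ico.mp hi).2,
    Finset.sum_congr rfl fun i hi =>
      S.cellMoment_middle (Finset.mem_Ico.mp hi).1 (Finset.mem_Ico.mp hi).2,
    S.cellMoment_half, S.cellMoment_one]
  simp only [Finset.sum_const, Nat.card_Ico, nsmul_eq_mul, tsub_zero]
  rw [Nat.cast_sub (by omega)]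
  push_cast
  ring

end HasProfile

/-- The breaks of the competitor with half-widths `h` and `g` and with `A` cells to the left of
`1/2`, equal to `c` beyond the index `R`. -/
noncomputable def profileBreaks (A R : ℕ) (h g : ℝ) (c : ℕ → ℝ) (i : ℕ) : ℝ :=
  if i ≤ A then 2 * i * h
  else if i ≤ R then (2 * A + 1) * h + (2 * ((i : ℝ) - A) - 1) * g else c i

/-- The points of the competitor with half-widths `h` and `g` and with `A` cells to the left of
`1/2`, equal to `p` beyond the index `R`. -/
noncomputable def profilePoints (A R : ℕ) (h g : ℝ) (p : ℕ → ℝ) (i : ℕ) : ℝ :=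
  if i ≤ A then (2 * i + 1) * h
  else if i ≤ R then (2 * A + 1) * h + 2 * ((i : ℝ) - A) * g else p i

theorem profileBreaks_of_le (hi : i ≤ A) : profileBreaks A R h g c i = 2 * i * h :=
  if_pos hi

theorem profileBreaks_of_mem (hi : A < i) (hiR : i ≤ R) :
    profileBreaks A R h g c i = (2 * A + 1) * h + (2 * ((i : ℝ) - A) - 1) * g :=
  (if_neg hi.not_ge).trans (if_pos hiR)

theorem profileBreaks_of_lt (hAR : A < R) (hi : R < i) : profileBreaks A R h g c i = c i :=
  (if_neg (hAR.trans hi).not_ge).trans (if_neg hi.not_ge)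

theorem profilePoints_of_le (hi : i ≤ A) : profilePoints A R h g p i = (2 * i + 1) * h :=
  if_pos hi

theorem profilePoints_of_mem (hi : A < i) (hiR : i ≤ R) :
    profilePoints A R h g p i = (2 * A + 1) * h + 2 * ((i : ℝ) - A) * g :=
  (if_neg hi.not_ge).trans (if_pos hiR)

theorem profilePoints_of_lt (hAR : A < R) (hi : R < i) : profilePoints A R h g p i = p i :=
  (if_neg (hAR.trans hi).not_ge).trans (if_neg hi.not_ge)

namespace HasProfile

theorem isPartition_profileBreaks (S : HasProfile n A R c p h g) (hA' : A' < R) (hh' : 0 ≤ h')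
    (hg' : 0 ≤ g') (hR : (2 * A' + 1) * h' + (2 * ((R : ℝ) - A') - 1) * g' ≤ 1) :
    IsPartition 0 (3 / 2) 0 n (profileBreaks A' R h' g' c) where
  first := by simp [profileBreaks]
  last := by rw [profileBreaks_of_lt hA' S.lt_card, S.isPartition.last]
  le_succ i _ hin := by
    rcases lt_trichotomy i A' with hi | rfl | hi
    · rw [profileBreaks_of_le hi.le, profileBreaks_of_le hi]
      push_cast
      linarith
    · rw [profileBreaks_of_le le_rfl, profileBreaks_of_mem i.lt_succ_self hA']
      push_cast
      linarith
    · rcases lt_trichotomy i R with hiR | rfl | hiR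
      · rw [profileBreaks_of_mem hi hiR.le, profileBreaks_of_mem (by omega) hiR]
        push_cast
        linarith
      · rw [profileBreaks_of_mem hi le_rfl, profileBreaks_of_lt hA' i.lt_succ_self]
        exact hR.trans S.one_mem.2
      · rw [profileBreaks_of_lt hA' hiR, profileBreaks_of_lt hA' (by omega)]
        exact S.isPartition.le_succ i i.zero_le hin

theorem competitor (S : HasProfile n A R c p h g) (hA' : A' < R) (hh' : 0 ≤ h') (hg' : 0 ≤ g')
    (hleft : 2 * A' * h' ≤ 1 / 2) (hhalf : 1 / 2 ≤ (2 * A' + 1) * h' + g')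
    (hR : (2 * A' + 1) * h' + (2 * ((R : ℝ) - A') - 1) * g' ≤ 1) :
    HasProfile n A' R (profileBreaks A' R h' g' c) (profilePoints A' R h' g' p) h' g' where
  isPartition := S.isPartition_profileBreaks hA' hh' hg' hR
  index_lt := hA'
  lt_card := S.lt_card
  break_left _ hi := profileBreaks_of_le hi
  point_left _ hi := profilePoints_of_le hi
  break_middle _ hi hiR := profileBreaks_of_mem hi hiR
  point_middle _ hi hiR := profilePoints_of_mem hi hiR
  half_mem := by
    rw [profileBreaks_of_le le_rfl, profileBreaks_of_mem A'.lt_succ_self hA']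
    push_cast
    exact ⟨hleft, by linarith⟩
  one_mem := by
    rw [profileBreaks_of_mem hA' le_rfl, profileBreaks_of_lt hA' R.lt_succ_self]
    exact ⟨hR, S.one_mem.2⟩

theorem cost_le_of_isOptimalQuantizer (S : HasProfile n A R c p h g)
    (ho : IsOptimalQuantizer f2 0 (3 / 2) 0 n c p) (hA' : A' < R) (hh' : 0 ≤ h') (hg' : 0 ≤ g')
    (hpR : (2 * A' + 1) * h' + 2 * ((R : ℝ) - A') * g' = p R) (hleft : 2 * A' * h' ≤ 1 / 2)
    (hhalf : 1 / 2 ≤ (2 * A' + 1) * h' + g') (hR : p R - g' ≤ 1) :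
    (2 * A + 1) * h ^ 3 + 4 * ((R : ℝ) - A) * g ^ 3 - (1 / 2 - (2 * A + 1) * h) ^ 3
      ≤ (2 * A' + 1) * h' ^ 3 + 4 * ((R : ℝ) - A') * g' ^ 3 - (1 / 2 - (2 * A' + 1) * h') ^ 3 := by
  have S' := S.competitor hA' hh' hg' hleft hhalf (by linarith)
  have hle := ho.cost_le _ (profilePoints A' R h' g' p) S'.isPartition
  have htail : ∑ i ∈ Finset.Ico (R + 1) n, cellMoment f2 2 (profileBreaks A' R h' g' c i)
        (profileBreaks A' R h' g' c (i + 1)) (profilePoints A' R h' g' p i)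
      = ∑ i ∈ Finset.Ico (R + 1) n, cellMoment f2 2 (c i) (c (i + 1)) (p i) :=
    Finset.sum_congr rfl fun i hi => by
      have hRi : R < i := (Finset.mem_Ico.mp hi).1
      rw [profileBreaks_of_lt hA' hRi, profileBreaks_of_lt hA' (hRi.trans i.lt_succ_self),
        profilePoints_of_lt hA' hRi]
  rw [S.quantizerCost_eq, S'.quantizerCost_eq, S'.point_middle R hA' le_rfl, hpR,
    profileBreaks_of_lt hA' R.lt_succ_self, htail] at hle
  linarith

end HasProfile

end Profile

section OptimalProfile

variable {f : ℝ → ℝ} {lo hi x w h g k : ℝ} {m n A B R A' B' i j l : ℕ} {c p c' p' : ℕ → ℝ}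

theorem IsPartition.exists_mem_Ico (h : IsPartition lo hi 0 n c) (hx : x ∈ Ico lo hi) :
    ∃ i < n, x ∈ Ico (c i) (c (i + 1)) := by
  obtain ⟨i, -, hin, hi, hi'⟩ := exists_not_and_succ (fun i => x < c i) n.zero_le
    (h.first ▸ hx.1.not_gt) (h.last ▸ hx.2)
  exact ⟨i, hin, not_lt.mp hi, hi'⟩

namespace IsOptimalQuantizer

theorem two_mul_point_of_eq_const (h : IsOptimalQuantizer f lo hi m n c p)
    (hf : IsDensityOn f lo hi) (hlh : lo < hi) (hmi : m ≤ i) (hin : i < n)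
    (hw : ∀ x ∈ Ioo (c i) (c (i + 1)), f x = w) :
    2 * p i = c i + c (i + 1) := by
  have hlt := h.lt_succ hf hlh hmi hin
  obtain ⟨x, hx⟩ := nonempty_Ioo.mpr hlt
  have hw0 : 0 < w := hw x hx ▸ (h.isDensityOn_cell hf hmi hin).pos x hx
  have hcen := h.centroid hf hlh hmi hin
  rw [cellMoment_of_eq_const hlt.le hw] at hcen
  have hprod : (c (i + 1) - c i) * (c i + c (i + 1) - 2 * p i) = 0 := by
    norm_num [hw0.ne'] at hcen
    linear_combination hcen
  have := (mul_eq_zero.mp hprod).resolve_left (sub_pos.mpr hlt).ne'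
  linarith

theorem eq_add_of_eq_const (h : IsOptimalQuantizer f lo hi m n c p) (hf : IsDensityOn f lo hi)
    (hlh : lo < hi) (hmj : m ≤ j) (hln : l < n) (hw : ∀ x ∈ Ioo (c j) (c l), f x = w)
    (hji : j ≤ i) (hil : i ≤ l) :
    c i = c j + 2 * ((i : ℝ) - j) * (p j - c j) ∧ p i = p j + 2 * ((i : ℝ) - j) * (p j - c j) := by
  induction i, hji using Nat.le_induction with
  | base => simp
  | succ i hji ih =>
    obtain ⟨hc, hp⟩ := ih (by omega)
    have hcell : Ioo (c i) (c (i + 1)) ⊆ Ioo (c j) (c l) :=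
      Ioo_subset_Ioo (h.isPartition.mono hmj hji (by omega))
        (h.isPartition.mono (by omega) hil hln.le)
    have hpoint := h.two_mul_point_of_eq_const hf hlh (by omega) (by omega)
      fun x hx => hw x (hcell hx)
    have hbreak := h.two_mul_break hf hlh (i := i) (by omega) (by omega)
    push_cast
    constructor <;> linarith

theorem le_add_one_of_break_le_of_lt_break (h : IsOptimalQuantizer f lo hi 0 n c p)
    (h' : IsOptimalQuantizer f lo hi 0 n c' p') (hf : IsDensityOn f lo hi) (hlh : lo < hi)
    (hin : i ≤ n) (hi : c i ≤ x) (hj : x < c' (j + 1)) : i ≤ j + 1 := by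
  by_contra! hji
  have := h'.break_lt_break_succ h hf hlh (i := j + 1) (by omega)
  have := h.isPartition.mono (Nat.zero_le _) hji hin
  linarith

theorem eq_mul_of_break_le_half (ho : IsOptimalQuantizer f2 0 (3 / 2) 0 n c p) (hAn : A < n)
    (hA : c A ≤ 1 / 2) (hi : i ≤ A) : c i = 2 * i * p 0 ∧ p i = (2 * i + 1) * p 0 := by
  have := ho.eq_add_of_eq_const isDensityOn_f2 (by norm_num) le_rfl hAn
    (fun x hx => f2_of_mem_left ⟨ho.isPartition.first ▸ hx.1.le, hx.2.le.trans hA⟩) i.zero_le hi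
  rw [ho.isPartition.first] at this
  norm_num at this
  exact ⟨this.1, by linarith⟩

theorem hasProfile (ho : IsOptimalQuantizer f2 0 (3 / 2) 0 n c p) (hAR : A < R) (hRn : R < n)
    (hA : 1 / 2 ∈ Ico (c A) (c (A + 1))) (hR : 1 ∈ Icc (c R) (c (R + 1))) :
    HasProfile n A R c p (p 0) (c (A + 1) - p A) := by
  have hleft {i : ℕ} (hi : i ≤ A) := ho.eq_mul_of_break_le_half (hAR.trans hRn) hA.1 hi
  have hmiddle {i : ℕ} (hi : A < i) (hiR : i ≤ R) :
      c i = p A + (2 * ((i : ℝ) - A) - 1) * (c (A + 1) - p A) ∧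
        p i = p A + 2 * ((i : ℝ) - A) * (c (A + 1) - p A) := by
    have := ho.eq_add_of_eq_const isDensityOn_f2 (by norm_num) (Nat.zero_le _) hRn
      (fun x hx => f2_of_mem_middle ⟨hA.2.trans hx.1, hx.2.trans_le hR.1⟩) hi hiR
    have hbreak := ho.two_mul_break isDensityOn_f2 (by norm_num) A.zero_le (by omega)
    rw [show p (A + 1) - c (A + 1) = c (A + 1) - p A by linarith] at this
    push_cast at this
    constructor <;> linarith
  refine ⟨ho.isPartition, hAR, hRn, fun i hi => (hleft hi).1, fun i hi => (hleft hi).2,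
    fun i hi hiR => ?_, fun i hi hiR => ?_, Ico_subset_Icc_self hA, hR⟩
  · rw [(hmiddle hi hiR).1, (hleft le_rfl).2]
  · rw [(hmiddle hi hiR).2, (hleft le_rfl).2]

theorem index_add_index_lt (ho : IsOptimalQuantizer f2 0 (3 / 2) 0 n c p) (hn : 4 ≤ n) (hAn : A < n)
    (hBn : B < n) (hA : 1 / 2 ∈ Ico (c A) (c (A + 1)))
    (hB : 1 / 2 ∈ Ico (3 / 2 - c (n - B)) (3 / 2 - c (n - (B + 1)))) : A + B + 1 < n := by
  have hd := ho.reflect_f2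
  have hAB := ho.le_add_one_of_break_le_of_lt_break hd isDensityOn_f2 (by norm_num) hAn.le hA.1 hB.2
  have hBA := hd.le_add_one_of_break_le_of_lt_break ho isDensityOn_f2 (by norm_num) hBn.le hB.1 hA.2
  have hle : A + B + 1 ≤ n := by
    by_contra! hlt
    have := ho.isPartition.mono (n - B).zero_le (show n - B ≤ A by omega) hAn.le
    linarith [hA.1, hB.1]
  refine hle.lt_of_ne fun heq => ?_
  have hleft {i : ℕ} (hi : i ≤ A) : 2 * i * p 0 ≤ 1 / 2 :=
    (ho.eq_mul_of_break_le_half hAn hA.1 hi).1 ▸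
      (ho.isPartition.mono i.zero_le hi hAn.le).trans hA.1
  have hright {i : ℕ} (hi : i ≤ B) : 2 * i * (3 / 2 - p (n - 1 - 0)) ≤ 1 / 2 :=
    (hd.eq_mul_of_break_le_half hBn hB.1 hi).1 ▸
      (hd.isPartition.mono i.zero_le hi hBn.le).trans hB.1
  have hsum : 1 / 2 ≤ p 0 + (3 / 2 - p (n - 1 - 0)) := by
    obtain ⟨hcA, hpA⟩ := ho.eq_mul_of_break_le_half hAn hA.1 le_rfl
    obtain ⟨hdB, hqB⟩ := hd.eq_mul_of_break_le_half hBn hB.1 le_rfl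
    rw [show n - 1 - B = A by omega] at hqB
    linarith [hA.1, hB.1]
  have hA1 := hleft (show 1 ≤ A by omega)
  have hB1 := hright (show 1 ≤ B by omega)
  rcases (by omega : 2 ≤ A ∨ 2 ≤ B) with h2 | h2
  · have hA2 := hleft h2
    push_cast at hA1 hA2 hB1
    linarith
  · have hB2 := hright h2
    push_cast at hA1 hB1 hB2
    linarith

end IsOptimalQuantizer

/-- An optimal quantizer of `P2` with `n` cells, of which `A` lie to the left of `1 / 2`, `B` lie to
the right of `1`, and two contain `1 / 2` and `1`. Its half-widths are `h` on the left and `g`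
in the middle; the right side is that of the reflection `x ↦ 3 / 2 - x`. -/
structure IsOptimalSide (n A B : ℕ) (c p : ℕ → ℝ) (h g : ℝ) : Prop where
  isOptimalQuantizer : IsOptimalQuantizer f2 0 (3 / 2) 0 n c p
  lt_card : A + B + 1 < n
  hasProfile : HasProfile n A (n - 1 - B) c p h g
  half_lt : 1 / 2 < c (A + 1)

namespace IsOptimalSide

theorem index_le_index_add_one (S : IsOptimalSide n A B c p h g)
    (S' : IsOptimalSide n A' B' c' p' k w) : A ≤ A' + 1 :=
  S.isOptimalQuantizer.le_add_one_of_break_le_of_lt_break S'.isOptimalQuantizer isDensityOn_f2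
    (by norm_num) (by have := S.lt_card; omega) S.hasProfile.half_mem.1 S'.half_lt

theorem sub_half_eq (S : IsOptimalSide n A B c p h g) : c (A + 1) - p A = g := by
  rw [S.hasProfile.break_middle (A + 1) (by omega) S.hasProfile.index_lt,
    S.hasProfile.point_left A le_rfl]
  push_cast
  ring

theorem gap_pos (S : IsOptimalSide n A B c p h g) : 0 < g := by
  have := S.isOptimalQuantizer.point_mem_Ioo isDensityOn_f2 (by norm_num) A.zero_le
    (by have := S.lt_card; omega)
  linarith [S.sub_half_eq, this.2]

theorem left_pos (S : IsOptimalSide n A B c p h g) : 0 < h := by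
  have := S.isOptimalQuantizer.point_mem_Ioo isDensityOn_f2 (by norm_num) le_rfl
    (by have := S.lt_card; omega)
  have hp := S.hasProfile.point_left 0 A.zero_le
  rw [S.isOptimalQuantizer.isPartition.first, hp] at this
  norm_num at this
  exact this.1

theorem sq_add_sq_eq (S : IsOptimalSide n A B c p h g) :
    h ^ 2 + (1 / 2 - (2 * A + 1) * h) ^ 2 = 2 * g ^ 2 := by
  have P := S.hasProfile
  have hAn : A < n := by have := S.lt_card; omega
  have hcen := S.isOptimalQuantizer.centroid isDensityOn_f2 (by norm_num) A.zero_le hAn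
  rw [← cellMoment_add locallyIntegrable_f2 1 _ (1 / 2),
    cellMoment_f2_left (P.isPartition.lo_le A.zero_le hAn.le) P.half_mem.1 le_rfl,
    cellMoment_f2_middle le_rfl P.half_mem.2
      ((P.isPartition.mono (Nat.zero_le _) P.index_lt P.lt_card.le).trans P.one_mem.1),
    P.break_left A le_rfl, P.point_left A le_rfl, P.break_middle (A + 1) (by omega) P.index_lt]
    at hcen
  push_cast at hcen
  linarith

theorem total_length (S : IsOptimalSide n A B c p h g)
    (T : IsOptimalSide n B A c' p' k g) (hpoint : p (n - 1 - B) + p' B = 3 / 2) :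
    (2 * A + 1) * h + (2 * B + 1) * k + 2 * ((n : ℝ) - 1 - A - B) * g = 3 / 2 := by
  have hpointR := S.hasProfile.point_middle _ S.hasProfile.index_lt le_rfl
  have hpointB := T.hasProfile.point_left B le_rfl
  have hlt := S.lt_card
  rw [Nat.sub_sub, Nat.cast_sub (by omega)] at hpointR
  rw [Nat.sub_sub] at hpoint
  push_cast at hpointR
  linarith

end IsOptimalSide

theorem IsOptimalQuantizer.exists_isOptimalSide (ho : IsOptimalQuantizer f2 0 (3 / 2) 0 n c p)
    (hn : 4 ≤ n) : ∃ A B h k g, IsOptimalSide n A B c p h g ∧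
      IsOptimalSide n B A (fun i => 3 / 2 - c (n - i)) (fun i => 3 / 2 - p (n - 1 - i)) k g := by
  have hd := ho.reflect_f2
  have hhalf : (1 / 2 : ℝ) ∈ Ico 0 (3 / 2) := by norm_num
  obtain ⟨A, hAn, hA⟩ := ho.isPartition.exists_mem_Ico hhalf
  obtain ⟨B, hBn, hB⟩ := hd.isPartition.exists_mem_Ico hhalf
  have hlt := ho.index_add_index_lt hn hAn hBn hA hB
  have hR : 1 ∈ Icc (c (n - 1 - B)) (c (n - 1 - B + 1)) := by
    rw [show n - 1 - B = n - (B + 1) by omega, show n - (B + 1) + 1 = n - B by omega]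
    constructor <;> linarith [hB.1, hB.2]
  have hR' : 1 ∈ Icc (3 / 2 - c (n - (n - 1 - A))) (3 / 2 - c (n - (n - 1 - A + 1))) := by
    rw [show n - (n - 1 - A) = A + 1 by omega, show n - (n - 1 - A + 1) = A by omega]
    constructor <;> linarith [hA.1, hA.2]
  have hleft := ho.hasProfile (R := n - 1 - B) (by omega) (by omega) hA hR
  have hright := hd.hasProfile (R := n - 1 - A) (by omega) (by omega) hB hR'
  have hgap : 3 / 2 - c (n - (B + 1)) - (3 / 2 - p (n - 1 - B)) = c (A + 1) - p A := by
    have hbreak := hleft.break_middle _ hleft.index_lt le_rfl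
    have hpoint := hleft.point_middle _ hleft.index_lt le_rfl
    rw [show n - (B + 1) = n - 1 - B by omega]
    linarith
  exact ⟨A, B, _, _, _, ⟨ho, hlt, hleft, hA.2⟩, ⟨hd, by omega, hgap ▸ hright, hB.2⟩⟩

end OptimalProfile

section NormalizedProfile

/-- One side of an optimal quantizer for `f2`, measured in units of half a middle cell. Half a left
cell has length `r`; the cells lying left of `1 / 2` and the left half of the cell of index `A` have
total length `a * r`, and `s` is the signed distance from the centre of that cell to `1 / 2`. The
middle half-cells are `b` in number and `q` is the analogue of `s` at the point `1`. The last field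
compares the cost with that of a competitor having left half-cells `u`, middle half-cells `v` and
its cell of index `A'` around `1 / 2`. -/
structure IsNormalizedSide (A : ℕ) (a b r s q : ℝ) : Prop where
  left_card : a = 2 * A + 1
  two_le_middle : 2 ≤ b
  ratio_pos : 0 < r
  sq_add_sq : r ^ 2 + s ^ 2 = 2
  neg_ratio_le : -r ≤ s
  offset_lt_one : s < 1
  opposite_lt_one : q < 1
  balance : b = r * a + 2 * s + q
  cost_le : ∀ (A' : ℕ) (a' b' u v : ℝ), a' = 2 * A' + 1 → a' + b' = a + b → 0 < b' → 0 ≤ u → 0 ≤ v →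
    a' * u + b' * v = a * r + b → s + a * r - a' * u ∈ Icc (-u) v → q ≤ v →
    a * r ^ 3 + 2 * b - s ^ 3 ≤ a' * u ^ 3 + 2 * b' * v ^ 3 - (s + a * r - a' * u) ^ 3

variable {n A B : ℕ} {c p c' p' : ℕ → ℝ} {h k g a b r s q θ : ℝ}

namespace IsOptimalSide

theorem offset_mem_Ico (S : IsOptimalSide n A B c p h g) :
    (1 / 2 - (2 * A + 1) * h) / g ∈ Ico (-(h / g)) 1 := by
  have P := S.hasProfile
  have hbreak := P.break_middle (A + 1) (by omega) P.index_lt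
  have hleft := P.half_mem.1
  have hright := S.half_lt
  rw [P.break_left A le_rfl] at hleft
  push_cast at hbreak
  rw [mem_Ico, ← neg_div, div_le_div_iff_of_pos_right S.gap_pos, div_lt_one S.gap_pos]
  constructor <;> linarith

theorem cost_le (S : IsOptimalSide n A B c p h g)
    (T : IsOptimalSide n B A c' p' k g) (hpoint : p (n - 1 - B) + p' B = 3 / 2)
    {A' : ℕ} {h' g' b' : ℝ} (hb' : b' = 2 * ((n : ℝ) - 1 - A' - B)) (hb'pos : 0 < b')
    (hh' : 0 ≤ h') (hg' : 0 ≤ g')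
    (hlength : (2 * A' + 1) * h' + b' * g' + (2 * B + 1) * k = 3 / 2)
    (hleft : 2 * A' * h' ≤ 1 / 2) (hhalf : 1 / 2 ≤ (2 * A' + 1) * h' + g')
    (hone : 1 / 2 - (2 * B + 1) * k ≤ g') :
    (2 * A + 1) * h ^ 3 + 4 * ((n : ℝ) - 1 - A - B) * g ^ 3 - (1 / 2 - (2 * A + 1) * h) ^ 3 ≤
      (2 * A' + 1) * h' ^ 3 + 2 * b' * g' ^ 3 - (1 / 2 - (2 * A' + 1) * h') ^ 3 := by
  have hlt := S.lt_card
  have hcast : ((n - 1 - B : ℕ) : ℝ) = n - 1 - B := by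
    rw [Nat.sub_sub, Nat.cast_sub (by omega)]
    push_cast
    ring
  have hA' : A' < n - 1 - B := by
    rw [← Nat.cast_lt (α := ℝ), hcast]
    linarith
  have hpoint' := T.hasProfile.point_left B le_rfl
  subst hb'
  have hcost := S.hasProfile.cost_le_of_isOptimalQuantizer S.isOptimalQuantizer hA' hh' hg'
    (by rw [hcast]; linarith) hleft hhalf (by linarith)
  rw [hcast] at hcost
  linarith

theorem isNormalizedSide (S : IsOptimalSide n A B c p h g)
    (T : IsOptimalSide n B A c' p' k g) (hpoint : p (n - 1 - B) + p' B = 3 / 2) :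
    IsNormalizedSide A (2 * A + 1) (2 * ((n : ℝ) - 1 - A - B)) (h / g)
      ((1 / 2 - (2 * A + 1) * h) / g) ((1 / 2 - (2 * B + 1) * k) / g) := by
  have hg := S.gap_pos
  have hlength := S.total_length T hpoint
  have hcard : (A : ℝ) + B + 1 + 1 ≤ n := mod_cast S.lt_card
  refine ⟨rfl, by linarith, div_pos S.left_pos hg, ?_, S.offset_mem_Ico.1, S.offset_mem_Ico.2,
    T.offset_mem_Ico.2, ?_, ?_⟩
  · have := S.sq_add_sq_eq
    field_simp
    linarith
  · field_simp
    linarith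
  · rintro A' _ b' u v rfl hab hb' hu hv hlen ⟨hl, hr⟩ hq
    have hb'eq : b' = 2 * ((n : ℝ) - 1 - A' - B) := by linarith
    have hoffset : (1 / 2 - (2 * A + 1) * h) / g + (2 * A + 1) * (h / g) - (2 * A' + 1) * u
        = (1 / 2 - (2 * A' + 1) * (u * g)) / g := by
      field_simp
      ring
    rw [hoffset] at hl hr ⊢
    rw [le_div_iff₀ hg] at hl
    rw [div_le_iff₀ hg] at hr hq
    field_simp at hlen
    have hcost := S.cost_le T hpoint hb'eq hb' (mul_nonneg hu hg.le) (mul_nonneg hv hg.le)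
      (by linarith) (by linarith) (by linarith) hq
    field_simp
    linarith

end IsOptimalSide

namespace IsNormalizedSide

theorem one_le_left (S : IsNormalizedSide A a b r s q) : 1 ≤ a := by
  rw [S.left_card, le_add_iff_nonneg_left]
  positivity

theorem one_le_ratio (S : IsNormalizedSide A a b r s q) : 1 ≤ r := by
  by_contra! hr
  nlinarith [S.sq_add_sq, S.neg_ratio_le, S.offset_lt_one, S.ratio_pos]

theorem neg_one_le_offset (S : IsNormalizedSide A a b r s q) : -1 ≤ s := by
  nlinarith [S.sq_add_sq, S.one_le_ratio]

theorem offset_le (S : IsNormalizedSide A a b r s q) : s ≤ r / a + 2 / b := by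
  have ha := S.one_le_left
  have hb := S.two_le_middle
  have hr := S.one_le_ratio
  have hq := S.opposite_lt_one
  -- Shortening the left cells by a total of `ε` perturbs the cost by a multiple of
  -- `ε ^ 2 * (r / a + 2 / b - s)`, up to `ε ^ 3`.
  obtain ⟨ε, hε, hεs, hε1⟩ : ∃ ε, 0 < ε ∧ ε ≤ 1 - s ∧ ε ≤ 1 :=
    ⟨min (1 - s) 1, lt_min (by linarith [S.offset_lt_one]) one_pos, min_le_left _ _,
      min_le_right _ _⟩
  have hεa : ε / a ≤ ε := div_le_self hε.le ha
  have hεb : 0 < ε / b := by positivity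
  have hleft : a * (r - ε / a) = a * r - ε := by field_simp
  have hmiddle : b * (1 + ε / b) = b + ε := by field_simp
  have hcost := S.cost_le A a b (r - ε / a) (1 + ε / b) S.left_card rfl (by linarith)
    (by linarith) (by linarith) (by linarith)
    ⟨by linarith [S.neg_ratio_le], by linarith⟩ (by linarith)
  rw [hleft, show s + a * r - (a * r - ε) = s + ε by ring] at hcost
  have hleft3 : a * (r - ε / a) ^ 3
      = a * r ^ 3 - 3 * r ^ 2 * ε + 3 * ε ^ 2 * (r / a) - ε ^ 3 * (1 / a) ^ 2 := by
    field_simp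
    ring
  have hmiddle3 : 2 * b * (1 + ε / b) ^ 3
      = 2 * b + 6 * ε + 3 * ε ^ 2 * (2 / b) + 2 * ε ^ 3 * (1 / b) ^ 2 := by
    field_simp
    ring
  have hb4 : (1 / b) ^ 2 ≤ 1 / 4 := by
    rw [one_div, inv_pow, inv_le_comm₀ (by positivity) (by norm_num)]
    nlinarith
  have hε3 : ε ^ 3 * (1 / b) ^ 2 ≤ ε ^ 3 * (1 / 4) := by gcongr
  have hpos : 0 ≤ ε ^ 3 * (1 / a) ^ 2 := by positivity
  rw [hleft3, hmiddle3, eq_sub_of_add_eq S.sq_add_sq] at hcost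
  have : 0 ≤ 3 * ε ^ 2 * (r / a + 2 / b - s) := by nlinarith [pow_pos hε 3]
  linarith [nonneg_of_mul_nonneg_right this (by positivity)]

theorem cost_le_succ (S : IsNormalizedSide A a b r s q) (hb : 4 ≤ b) (h0 : 0 ≤ θ) (h2 : θ ≤ 2)
    (hhalf : θ - s ≤ (r * a + θ) / (a + 2)) :
    4 * (r ^ 3 - 2) ≤ (2 * r - θ) ^ 2 * (3 * r - (2 * r - θ) / (a + 2)) / (a + 2)
      + 2 * (2 - θ) ^ 2 * (3 + (2 - θ) / (b - 2)) / (b - 2) - 3 * s * θ ^ 2 + θ ^ 3 := by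
  have ha := S.one_le_left
  have hr := S.ratio_pos
  have hb2 : 0 < b - 2 := by linarith
  have hmid : 1 ≤ (b - θ) / (b - 2) := by
    rw [le_div_iff₀ hb2]
    linarith
  have hleft : (a + 2) * ((r * a + θ) / (a + 2)) = r * a + θ := by field_simp
  have hcost := S.cost_le (A + 1) (a + 2) (b - 2) ((r * a + θ) / (a + 2)) ((b - θ) / (b - 2))
    (by rw [S.left_card]; push_cast; ring) (by ring) hb2 (by positivity) (by linarith)
    (by field_simp; ring)
    ⟨by linarith, by linarith [S.offset_lt_one]⟩
    (by linarith [S.opposite_lt_one])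
  have hleft3 : (a + 2) * ((r * a + θ) / (a + 2)) ^ 3 = r ^ 3 * (a + 2) - 3 * r ^ 2 * (2 * r - θ)
      + (2 * r - θ) ^ 2 * (3 * r - (2 * r - θ) / (a + 2)) / (a + 2) := by
    field_simp
    ring
  have hmid3 : 2 * (b - 2) * ((b - θ) / (b - 2)) ^ 3 = 2 * (b - 2) + 6 * (2 - θ)
      + 2 * (2 - θ) ^ 2 * (3 + (2 - θ) / (b - 2)) / (b - 2) := by
    field_simp
    ring
  rw [hleft3, hmid3, hleft] at hcost
  linear_combination hcost + 3 * θ * S.sq_add_sq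

theorem cost_le_pred (S : IsNormalizedSide A a b r s q) (hA : 1 ≤ A) (h0 : 0 ≤ θ) (h2 : θ ≤ 2)
    (hhalf : s + θ ≤ (b + θ) / (b + 2)) (hone : q ≤ (b + θ) / (b + 2)) :
    4 * (2 - r ^ 3) ≤ (2 * r - θ) ^ 2 * (3 * r + (2 * r - θ) / (a - 2)) / (a - 2)
      + 2 * (2 - θ) ^ 2 * (3 - (2 - θ) / (b + 2)) / (b + 2) - 3 * s * θ ^ 2 - θ ^ 3 := by
  have hr := S.one_le_ratio
  have hb := S.two_le_middle
  have ha : 0 < a - 2 := by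
    have : (1 : ℝ) ≤ A := mod_cast hA
    linarith [S.left_card]
  have hratio : 1 ≤ (r * a - θ) / (a - 2) := by
    rw [le_div_iff₀ ha]
    nlinarith
  have hleft : (a - 2) * ((r * a - θ) / (a - 2)) = r * a - θ := by field_simp
  have hcost := S.cost_le (A - 1) (a - 2) (b + 2) ((r * a - θ) / (a - 2)) ((b + θ) / (b + 2))
    (by rw [S.left_card, Nat.cast_sub hA]; push_cast; ring) (by ring) (by positivity)
    (by linarith) (by positivity) (by field_simp; ring)
    ⟨by linarith [S.neg_one_le_offset], by linarith⟩ hone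
  have hleft3 : (a - 2) * ((r * a - θ) / (a - 2)) ^ 3 = r ^ 3 * (a - 2) + 3 * r ^ 2 * (2 * r - θ)
      + (2 * r - θ) ^ 2 * (3 * r + (2 * r - θ) / (a - 2)) / (a - 2) := by
    field_simp
    ring
  have hmid3 : 2 * (b + 2) * ((b + θ) / (b + 2)) ^ 3 = 2 * (b + 2) - 6 * (2 - θ)
      + 2 * (2 - θ) ^ 2 * (3 - (2 - θ) / (b + 2)) / (b + 2) := by
    field_simp
    ring
  rw [hleft3, hmid3, hleft] at hcost
  linear_combination hcost - 3 * θ * S.sq_add_sq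

end IsNormalizedSide

/-- The normalized data of the two sides of an optimal quantizer of `P2`: the right side, read
through the reflection `x ↦ 3 / 2 - x`, has `B`, `e`, `t`, `q` in place of `A`, `a`, `r`, `s`. -/
structure IsNormalizedPair (n A B : ℕ) (a e b r s t q : ℝ) : Prop where
  middle_card : b = 2 * ((n : ℝ) - 1 - A - B)
  left : IsNormalizedSide A a b r s q
  right : IsNormalizedSide B e b t q s
  left_le : A ≤ B + 1
  right_le : B ≤ A + 1

variable {e t : ℝ}

theorem IsOptimalSide.isNormalizedPair (S : IsOptimalSide n A B c p h g)
    (T : IsOptimalSide n B A (fun i => 3 / 2 - c (n - i)) (fun i => 3 / 2 - p (n - 1 - i)) k g) :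
    IsNormalizedPair n A B (2 * A + 1) (2 * B + 1) (2 * ((n : ℝ) - 1 - A - B)) (h / g)
      ((1 / 2 - (2 * A + 1) * h) / g) (k / g) ((1 / 2 - (2 * B + 1) * k) / g) where
  middle_card := rfl
  left := S.isNormalizedSide T (by ring)
  right := by
    have hlt := S.lt_card
    have hpoint : 3 / 2 - p (n - 1 - (n - 1 - A)) + p A = 3 / 2 := by
      rw [show n - 1 - (n - 1 - A) = A by omega]
      ring
    convert T.isNormalizedSide S hpoint using 1
    ring
  left_le := S.index_le_index_add_one T
  right_le := T.index_le_index_add_one S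

end NormalizedProfile

section CubeBounds

theorem ratio_le_sqrt_two {r s : ℝ} (hrs : r ^ 2 + s ^ 2 = 2) : r ≤ √2 :=
  Real.le_sqrt_of_sq_le (by linarith [sq_nonneg s])

theorem sqrt_two_mem_Icc : √2 ∈ Icc 1.414 1.4142136 :=
  ⟨Real.le_sqrt_of_sq_le (by norm_num), Real.sqrt_le_iff.mpr (by norm_num)⟩

variable {A B n : ℕ} {a e b r s t q x D : ℝ}

theorem lower_bounds_of_two_le_cube (hr : 0 ≤ r) (hr2 : r ≤ √2) (hr3 : 2 ≤ r ^ 3) :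
    1.2599 + 0.186 * (r ^ 3 - 2) ≤ r ∧ 1.5873 + 0.498 * (r ^ 3 - 2) ≤ r ^ 2 := by
  have hlow : 1.2599 ≤ r := le_of_pow_le_pow_left₀ three_ne_zero hr (by norm_num; linarith)
  have hchord : 0 ≤ (r - 1.2599) * (1.4143 - r) :=
    mul_nonneg (by linarith) (by linarith [sqrt_two_mem_Icc.2])
  constructor <;> nlinarith [mul_nonneg hchord hr]

namespace IsNormalizedPair

theorem middle_lower_bound (N : IsNormalizedPair n A B a e b r s t q) :
    r * a + 2 * s - 1 ≤ b := by
  linarith [N.left.balance, N.right.neg_one_le_offset]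

end IsNormalizedPair

theorem left_cost_succ_le (hx : 0 < x) (hx15 : 15 * x ≤ 1) (hax : a * x = 1 - 4 * x) (hr : 1 ≤ r)
    (hr2 : r ≤ √2) (hcube : 11.7 * x ≤ r ^ 3 - 2) (hsq : 1.5873 + 5.8 * x ≤ r ^ 2) :
    (2 * r - 11 * x) ^ 2 * (3 * r - (2 * r - 11 * x) / (a + 2)) / (a + 2) - 4 * (r ^ 3 - 2)
      ≤ (24 + 12 * (11.7 * x) - 12 * (1.5873 + 5.8 * x) * (11 * x) + 3 * 1.4143 * (11 * x) ^ 2)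
        * (x / (1 - 2 * x)) - 46.8 * x := by
  have ha : a + 2 = (1 - 2 * x) / x := by
    field_simp
    linarith
  have hx2 : 0 < 1 - 2 * x := by linarith
  set i := x / (1 - 2 * x) with hi
  have hi0 : 0 < i := div_pos hx hx2
  have hi13 : 13 * i ≤ 1 := by
    rw [hi, mul_div_assoc', div_le_one hx2]
    linarith
  have hsplit : (2 * r - 11 * x) ^ 2 * (3 * r - (2 * r - 11 * x) / (a + 2)) / (a + 2)
      = (2 * r - 11 * x) ^ 2 * (3 * r) * i - (2 * r - 11 * x) ^ 3 * i ^ 2 := by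
    rw [ha, hi]
    field_simp
  have hdrop : 0 ≤ (2 * r - 11 * x) ^ 3 * i ^ 2 := by
    have : 0 ≤ 2 * r - 11 * x := by linarith
    positivity
  have hsq' : (1.5873 + 5.8 * x) * (11 * x) ≤ r ^ 2 * (11 * x) := by gcongr
  have hlin : r * (11 * x) ^ 2 ≤ 1.4143 * (11 * x) ^ 2 := by
    gcongr
    linarith [sqrt_two_mem_Icc.2]
  have hcubic : 0 ≤ (r ^ 3 - 2 - 11.7 * x) * (4 - 12 * i) :=
    mul_nonneg (by linarith) (by linarith)
  have hquad := mul_le_mul_of_nonneg_right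
    (by linarith : -12 * r ^ 2 * (11 * x) + 3 * r * (11 * x) ^ 2
      ≤ -12 * (1.5873 + 5.8 * x) * (11 * x) + 3 * 1.4143 * (11 * x) ^ 2) hi0.le
  linarith

theorem middle_succ_lower_bound (hx : 0 < x) (hx15 : 15 * x ≤ 1) (hax : a * x = 1 - 4 * x)
    (hr : 1.2599 + 2.17 * x ≤ r) (hs : -s ≤ 0.684 - 6.4 * x) (hb : r * a + 2 * s - 1 ≤ b) :
    1.2599 - 7.25 * x ≤ (b - 2) * x := by
  have hbx : (r * a + 2 * s - 1 - 2) * x ≤ (b - 2) * x := by gcongr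
  have hra : (1.2599 + 2.17 * x) * (a * x) ≤ r * (a * x) := by
    rw [hax]
    gcongr
    linarith
  have hsx : -s * x ≤ (0.684 - 6.4 * x) * x := by gcongr
  rw [hax] at hra
  nlinarith

theorem succ_cost_neg (hx : 0 < x) (hx15 : 15 * x ≤ 1) (hD : D = 1.2599 - 7.25 * x) :
    (24 + 12 * (11.7 * x) - 12 * (1.5873 + 5.8 * x) * (11 * x) + 3 * 1.4143 * (11 * x) ^ 2)
        * (x / (1 - 2 * x)) - 46.8 * x
      + 2 * (2 - 11 * x) ^ 2 * (3 + (2 - 11 * x) / (D / x)) / (D / x)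
      + 3 * (0.684 - 6.4 * x) * (11 * x) ^ 2 + (11 * x) ^ 3 < 0 := by
  have hD0 : 0 < D := by linarith
  have hx2 : 0 < 1 - 2 * x := by linarith
  have hpoly : 0 < 46.8 * (1 - 2 * x) * D ^ 2
      - (24 + 12 * (11.7 * x) - 12 * (1.5873 + 5.8 * x) * (11 * x) + 3 * 1.4143 * (11 * x) ^ 2)
        * D ^ 2
      - 2 * (2 - 11 * x) ^ 2 * (3 * D + (2 - 11 * x) * x) * (1 - 2 * x)
      - 3 * (0.684 - 6.4 * x) * 121 * x * D ^ 2 * (1 - 2 * x)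
      - 1331 * x ^ 2 * D ^ 2 * (1 - 2 * x) := by
    have hbern : ∀ i j : ℕ, 0 ≤ x ^ i * (1 - 15 * x) ^ j := fun i j =>
      mul_nonneg (pow_nonneg hx.le i) (pow_nonneg (by linarith) j)
    subst hD
    linarith [hbern 0 5, hbern 1 4, hbern 2 3, hbern 3 2, hbern 4 1, hbern 5 0]
  rw [← neg_pos]
  refine lt_of_lt_of_eq (mul_pos hpoly (by positivity : 0 < x / ((1 - 2 * x) * D ^ 2))) ?_
  field_simp
  ring

theorem IsNormalizedPair.cube_le (N : IsNormalizedPair n A B a e b r s t q) (ha : 11 ≤ a) :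
    r ^ 3 ≤ 2 + 11.7 / (a + 4) := by
  by_contra! hlarge
  obtain ⟨x, hx⟩ : ∃ x, x = 1 / (a + 4) := ⟨_, rfl⟩
  have hx0 : 0 < x := by rw [hx]; positivity
  have hax : a * x = 1 - 4 * x := by
    rw [hx]
    field_simp
    ring
  have hx15 : 15 * x ≤ 1 := by nlinarith
  have hcube : 11.7 * x ≤ r ^ 3 - 2 := by
    rw [hx, mul_one_div]
    linarith
  have hr1 := N.left.one_le_ratio
  have hr2 := ratio_le_sqrt_two N.left.sq_add_sq
  obtain ⟨hr, hsq⟩ := lower_bounds_of_two_le_cube (by linarith) hr2 (by linarith)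
  have hs' : -s ≤ 0.684 - 6.4 * x := by nlinarith [N.left.sq_add_sq, sq_nonneg (-s - 0.45)]
  have hmiddle := middle_succ_lower_bound hx0 hx15 hax (by linarith) hs' N.middle_lower_bound
  have hmiddle' : (1.2599 - 7.25 * x) / x ≤ b - 2 := (div_le_iff₀ hx0).mpr hmiddle
  have hD : 0 < (1.2599 - 7.25 * x) / x := div_pos (by linarith) hx0
  have hb : 4 ≤ b := by nlinarith
  have hhalf : 11 * x - s ≤ (r * a + 11 * x) / (a + 2) := by
    rw [le_div_iff₀ (by linarith)]
    nlinarith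
  have hcost := N.left.cost_le_succ hb (by linarith) (by linarith) hhalf
  have hleft := left_cost_succ_le hx0 hx15 hax hr1 hr2 hcube (by linarith)
  have hmid : 2 * (2 - 11 * x) ^ 2 * (3 + (2 - 11 * x) / (b - 2)) / (b - 2)
      ≤ 2 * (2 - 11 * x) ^ 2 * (3 + (2 - 11 * x) / ((1.2599 - 7.25 * x) / x))
        / ((1.2599 - 7.25 * x) / x) := by
    have : 0 ≤ 2 - 11 * x := by linarith
    gcongr
  have hoffset : -s * (11 * x) ^ 2 ≤ (0.684 - 6.4 * x) * (11 * x) ^ 2 := by gcongr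
  linarith [succ_cost_neg hx0 hx15 rfl]

theorem bounds_of_cube_le_two (hr : 1 ≤ r) (hr3 : r ^ 3 ≤ 2) :
    1.2599 - 0.2599 * (2 - r ^ 3) ≤ r ∧ 1.5873 - 0.5874 * (2 - r ^ 3) ≤ r ^ 2 ∧
      r ≤ 1.26 - 0.21 * (2 - r ^ 3) - 0.035 * (2 - r ^ 3) ^ 2 := by
  have hhigh : r ≤ 1.26 :=
    le_of_pow_le_pow_left₀ three_ne_zero (by norm_num) (by norm_num; linarith)
  have hchord : 0 ≤ (r - 1) * (1.26 - r) := mul_nonneg (by linarith) (by linarith)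
  refine ⟨by nlinarith [mul_nonneg hchord (by linarith : 0 ≤ r)],
    by nlinarith [mul_nonneg hchord (by linarith : 0 ≤ r)], ?_⟩
  have hw1 : r ^ 3 ≥ 1 := one_le_pow₀ hr
  obtain ⟨w, hw⟩ : ∃ w, w = 2 - r ^ 3 := ⟨_, rfl⟩
  rw [← hw]
  refine le_of_pow_le_pow_left₀ three_ne_zero (by nlinarith) ?_
  have hbern : ∀ i j : ℕ, 0 ≤ w ^ i * (1 - w) ^ j := fun i j =>
    mul_nonneg (pow_nonneg (by linarith) i) (pow_nonneg (by linarith) j)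
  nlinarith [hbern 0 6, hbern 1 5, hbern 2 4, hbern 3 3, hbern 4 2, hbern 5 1, hbern 6 0]

theorem half_le_neg_offset (hrs : r ^ 2 + s ^ 2 = 2) (hs : s ≤ 0) (hr : 1 ≤ r) (hr3 : r ^ 3 ≤ 2) :
    0.5 ≤ -s := by
  obtain ⟨-, -, hr'⟩ := bounds_of_cube_le_two hr hr3
  exact le_of_pow_le_pow_left₀ two_ne_zero (by linarith) (by nlinarith)

/-- Upper bound for `-s` when `r ^ 3 = 2 - 11 * x`, where `x = 1 / (a + 5)`. -/
noncomputable def predOffset (x : ℝ) : ℝ :=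
  0.6793 + 0.979 / 3 * (11 * x)

/-- Lower bound for `(b + 2) * x` when `r ^ 3 = 2 - 11 * x`, where `x = 1 / (a + 5)`. -/
noncomputable def predMiddle (x : ℝ) : ℝ :=
  (1.2599 - 0.2599 * (11 * x)) * (1 - 5 * x) - 2 * predOffset x * x + x

/-- Upper bound for `r` when `r ^ 3 = 2 - 11 * x`, where `x = 1 / (a + 5)`. -/
noncomputable def predRatio (x : ℝ) : ℝ :=
  1.26 - 0.21 * (11 * x) - 0.035 * (11 * x) ^ 2

variable {ε : ℝ}

theorem le_predMiddle_sub (hx12 : 12 * x ≤ 1) (hε : ε ≤ 1 - 11 * x) :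
    0.49 ≤ predMiddle x - 0.26 * ε := by
  rw [predMiddle, predOffset]
  nlinarith [sq_nonneg (12 * x - 1)]

theorem predMiddle_sub_le (hx : 0 < x) (hx12 : 12 * x ≤ 1) (hax : a * x = 1 - 5 * x) (hε : 0 ≤ ε)
    (hr : 1.2599 - 0.2599 * (11 * x + ε) ≤ r) (hs : -s ≤ predOffset x + 0.979 / 3 * ε)
    (hb : r * a + 2 * s - 1 ≤ b) : predMiddle x - 0.26 * ε ≤ (b + 2) * x := by
  have hbx : (r * a + 2 * s - 1 + 2) * x ≤ (b + 2) * x := by gcongr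
  have hrax : r * a * x = r * (1 - 5 * x) := by rw [mul_assoc, hax]
  have hra : (1.2599 - 0.2599 * (11 * x + ε)) * (1 - 5 * x) ≤ r * (1 - 5 * x) := by
    gcongr
    linarith
  have hsx : -s * x ≤ (predOffset x + 0.979 / 3 * ε) * x := by gcongr
  have hεx : 0 ≤ ε * x := by positivity
  rw [predMiddle]
  linarith

theorem one_div_le_of_predMiddle (hx : 0 < x) (hx12 : 12 * x ≤ 1) (hε : 0 ≤ ε)
    (hε1 : ε ≤ 1 - 11 * x) (hb : 0 < b + 2) (hle : predMiddle x - 0.26 * ε ≤ (b + 2) * x) :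
    1 / (b + 2) ≤ x / predMiddle x + 1.1 * x * ε := by
  have hlow := le_predMiddle_sub hx12 hε1
  set D := predMiddle x
  have hD : 0.49 ≤ D := by linarith
  have hD0 : 0 < D := by linarith
  have hinv : 1 / (b + 2) ≤ x / (D - 0.26 * ε) := by
    rw [div_le_div_iff₀ hb (by linarith)]
    linarith
  refine hinv.trans ?_
  rw [div_le_iff₀ (by linarith)]
  have hexpand : (x / D + 1.1 * x * ε) * (D - 0.26 * ε)
      = x + x * ε * (1.1 * (D - 0.26 * ε) - 0.26 / D) := by
    field_simp
    ring
  have hslope : 0.26 / D ≤ 1.1 * (D - 0.26 * ε) := by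
    rw [div_le_iff₀ hD0]
    linarith [mul_le_mul hlow hD (by norm_num) (by linarith)]
  rw [hexpand, le_add_iff_nonneg_right]
  exact mul_nonneg (by positivity) (by linarith)

theorem middle_cost_pred_le (hx : 0 < x) (hx12 : 12 * x ≤ 1) (hε : 0 ≤ ε) (hε1 : ε ≤ 1 - 11 * x)
    (hb : 2 ≤ b) (hle : predMiddle x - 0.26 * ε ≤ (b + 2) * x) :
    2 * (2 - 12 * x) ^ 2 * (3 - (2 - 12 * x) / (b + 2)) / (b + 2)
      ≤ 2 * (2 - 12 * x) ^ 2 * (3 - (2 - 12 * x) * (x / predMiddle x)) * (x / predMiddle x)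
        + 0.8 * ε := by
  have hinv := one_div_le_of_predMiddle hx hx12 hε hε1 (by linarith) hle
  have hlow := le_predMiddle_sub hx12 hε1
  have hD0 : 0 < predMiddle x := by linarith
  have hy : x / predMiddle x ≤ 0.2 := by
    rw [div_le_iff₀ hD0]
    linarith
  have hy0 : 0 < x / predMiddle x := by positivity
  set y := x / predMiddle x
  obtain ⟨l, hl⟩ : ∃ l, l = 1 / (b + 2) := ⟨_, rfl⟩
  have hl0 : 0 < l := by rw [hl]; positivity
  have hl4 : 4 * l ≤ 1 := by
    rw [hl, mul_one_div, div_le_one] <;> linarith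
  have hxε : 0 ≤ 1.1 * x * ε := by positivity
  rw [← hl] at hinv
  have hconcave : (3 - (2 - 12 * x) * l) * l ≤ (3 - (2 - 12 * x) * y) * y + 3.3 * x * ε := by
    rcases le_total l y with hly | hyl
    · have hsum : (2 - 12 * x) * (y + l) ≤ 2 * (y + l) := by gcongr; linarith
      nlinarith [mul_nonneg (sub_nonneg.mpr hly)
        (by linarith : 0 ≤ 3 - (2 - 12 * x) * (y + l))]
    · have hsum : 0 ≤ (2 - 12 * x) * (y + l) := mul_nonneg (by linarith) (by positivity)
      nlinarith [mul_nonneg (sub_nonneg.mpr hyl) hsum]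
  have hweight : 2 * (2 - 12 * x) ^ 2 * (3.3 * x) ≤ 0.8 := by
    nlinarith [mul_nonneg (mul_nonneg hx.le (by linarith : 0 ≤ 1 - 12 * x)) hx.le,
      sq_nonneg (18 * x - 1)]
  calc 2 * (2 - 12 * x) ^ 2 * (3 - (2 - 12 * x) / (b + 2)) / (b + 2)
      = 2 * (2 - 12 * x) ^ 2 * ((3 - (2 - 12 * x) * l) * l) := by
        rw [hl]
        field_simp
    _ ≤ 2 * (2 - 12 * x) ^ 2 * ((3 - (2 - 12 * x) * y) * y + 3.3 * x * ε) := by gcongr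
    _ ≤ _ := by linarith [mul_le_mul_of_nonneg_right hweight hε]

theorem left_cost_pred_le (hx : 0 < x) (hx12 : 12 * x ≤ 1) (hax : a * x = 1 - 5 * x) (hr1 : 1 ≤ r)
    (hr : r ≤ predRatio x) :
    (2 * r - 12 * x) ^ 2 * (3 * r + (2 * r - 12 * x) / (a - 2)) / (a - 2)
      ≤ 3 * predRatio x * (2 * predRatio x - 12 * x) ^ 2 * (x / (1 - 7 * x))
        + (2 * predRatio x - 12 * x) ^ 3 * (x / (1 - 7 * x)) ^ 2 := by
  have hx7 : 0 < 1 - 7 * x := by linarith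
  have ha : a - 2 = (1 - 7 * x) / x := by
    field_simp
    linarith
  have hsplit : (2 * r - 12 * x) ^ 2 * (3 * r + (2 * r - 12 * x) / (a - 2)) / (a - 2)
      = 3 * r * (2 * r - 12 * x) ^ 2 * (x / (1 - 7 * x))
        + (2 * r - 12 * x) ^ 3 * (x / (1 - 7 * x)) ^ 2 := by
    rw [ha]
    generalize 1 - 7 * x = y at hx7 ⊢
    field_simp
  have : 0 ≤ 2 * r - 12 * x := by linarith
  have : 0 ≤ predRatio x := by linarith
  rw [hsplit]
  gcongr

theorem pred_poly_pos (hx : 0 < x) (hx12 : 12 * x ≤ 1) {D u : ℝ} (hD : D = predMiddle x)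
    (hu : u = 2 * predRatio x - 12 * x) :
    0 < 44 * (1 - 7 * x) ^ 2 * D ^ 2 - (3 * predRatio x * u ^ 2 * (1 - 7 * x) + u ^ 3 * x) * D ^ 2
      - (6 * (2 - 12 * x) ^ 2 * D - 2 * (2 - 12 * x) ^ 3 * x) * (1 - 7 * x) ^ 2
      - 3 * predOffset x * 144 * x * (1 - 7 * x) ^ 2 * D ^ 2
      + 1728 * x ^ 2 * (1 - 7 * x) ^ 2 * D ^ 2 := by
  subst hD hu
  unfold predMiddle predRatio predOffset
  have hbern : ∀ i j : ℕ, 0 ≤ x ^ i * (1 - 12 * x) ^ j := fun i j =>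
    mul_nonneg (pow_nonneg hx.le i) (pow_nonneg (by linarith) j)
  linarith [hbern 0 11, hbern 1 10, hbern 2 9, hbern 3 8, hbern 4 7, hbern 5 6, hbern 6 5,
    hbern 7 4, hbern 8 3, hbern 9 2, hbern 10 1, hbern 11 0]

theorem pred_cost_lt (hx : 0 < x) (hx12 : 12 * x ≤ 1) (hD : 0 < predMiddle x) :
    3 * predRatio x * (2 * predRatio x - 12 * x) ^ 2 * (x / (1 - 7 * x))
        + (2 * predRatio x - 12 * x) ^ 3 * (x / (1 - 7 * x)) ^ 2
      + 2 * (2 - 12 * x) ^ 2 * (3 - (2 - 12 * x) * (x / predMiddle x)) * (x / predMiddle x)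
      + 3 * predOffset x * (12 * x) ^ 2 - (12 * x) ^ 3 < 44 * x := by
  have hx7 : 0 < 1 - 7 * x := by linarith
  have hpoly := pred_poly_pos hx hx12 rfl rfl
  generalize predMiddle x = D at hD hpoly ⊢
  generalize 2 * predRatio x - 12 * x = u at hpoly ⊢
  generalize predRatio x = ρ at hpoly ⊢
  generalize predOffset x = ν at hpoly ⊢
  rw [← sub_pos]
  refine lt_of_lt_of_eq (mul_pos hpoly (by positivity : 0 < x / ((1 - 7 * x) ^ 2 * D ^ 2))) ?_
  field_simp
  ring

theorem offset_and_ratio_bounds (hx : 0 < x) (hrs : r ^ 2 + s ^ 2 = 2) (hr1 : 1 ≤ r)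
    (hε0 : 0 ≤ ε) (hε : ε = 2 - r ^ 3 - 11 * x) :
    -s ≤ predOffset x + 0.979 / 3 * ε ∧ r ≤ predRatio x := by
  obtain ⟨-, hsq, hr⟩ := bounds_of_cube_le_two hr1 (by linarith)
  constructor
  · rw [predOffset]
    linarith [sq_nonneg (-s - 0.9)]
  · have : (11 * x) ^ 2 ≤ (2 - r ^ 3) ^ 2 := by gcongr; linarith
    rw [predRatio]
    linarith

theorem pred_total_cost_lt (hx : 0 < x) (hx12 : 12 * x ≤ 1) (hax : a * x = 1 - 5 * x)
    (hrs : r ^ 2 + s ^ 2 = 2) (hr1 : 1 ≤ r) (hε0 : 0 ≤ ε) (hε : ε = 2 - r ^ 3 - 11 * x)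
    (hb2 : 2 ≤ b) (hb : r * a + 2 * s - 1 ≤ b) :
    (2 * r - 12 * x) ^ 2 * (3 * r + (2 * r - 12 * x) / (a - 2)) / (a - 2)
      + 2 * (2 - 12 * x) ^ 2 * (3 - (2 - 12 * x) / (b + 2)) / (b + 2) - 3 * s * (12 * x) ^ 2
      - (12 * x) ^ 3 < 4 * (2 - r ^ 3) := by
  have hε1 : ε ≤ 1 - 11 * x := by linarith [one_le_pow₀ (n := 3) hr1]
  obtain ⟨hs, hr⟩ := offset_and_ratio_bounds hx hrs hr1 hε0 hε
  have hr' := (bounds_of_cube_le_two hr1 (by linarith)).1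
  have hmiddle := predMiddle_sub_le hx hx12 hax hε0 (by linarith) hs hb
  have hoffset : -s * (12 * x) ^ 2 ≤ predOffset x * (12 * x) ^ 2 + 0.979 / 3 * ε := by
    have hx1 : ε * (12 * x) ^ 2 ≤ ε :=
      mul_le_of_le_one_right hε0 (pow_le_one₀ (by positivity) hx12)
    linarith [mul_le_mul_of_nonneg_right hs (sq_nonneg (12 * x))]
  have hleft := left_cost_pred_le hx hx12 hax hr1 hr
  have hmid := middle_cost_pred_le hx hx12 hε0 hε1 hb2 hmiddle
  have hlt := pred_cost_lt hx hx12 (by linarith [le_predMiddle_sub hx12 hε1])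
  calc _ ≤ _ := sub_le_sub_right (sub_le_sub_right (add_le_add hleft hmid) _) _
    _ < 4 * (2 - r ^ 3) := by linarith

namespace IsNormalizedPair

theorem opposite_le (N : IsNormalizedPair n A B a e b r s t q) (ha : 7 ≤ a) : q ≤ b / (b + 2) := by
  have hb := N.left.two_le_middle
  rcases le_total q 0 with hq | hq
  · exact hq.trans (by positivity)
  have hra : 1 * a ≤ r * a := mul_le_mul_of_nonneg_right N.left.one_le_ratio (by linarith)
  have hb5 : 5 ≤ b := by linarith [N.left.balance, N.left.neg_one_le_offset]
  have he5 : 5 ≤ e := by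
    have : (A : ℝ) ≤ B + 1 := mod_cast N.left_le
    linarith [N.left.left_card, N.right.left_card]
  have ht : t ≤ 1.5 :=
    (ratio_le_sqrt_two N.right.sq_add_sq).trans (by linarith [sqrt_two_mem_Icc.2])
  have hq' : q ≤ 0.7 := calc
    q ≤ t / e + 2 / b := N.right.offset_le
    _ ≤ 1.5 / 5 + 2 / 5 := by gcongr
    _ = 0.7 := by norm_num
  rw [le_div_iff₀ (by linarith)]
  linarith [mul_le_mul_of_nonneg_right hq' (by linarith : 0 ≤ b + 2)]

theorem le_cube (N : IsNormalizedPair n A B a e b r s t q) (ha : 7 ≤ a) (hs : s ≤ 0) :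
    2 - 11 / (a + 5) ≤ r ^ 3 := by
  by_contra! hsmall
  obtain ⟨x, hx⟩ : ∃ x, x = 1 / (a + 5) := ⟨_, rfl⟩
  have hx0 : 0 < x := by rw [hx]; positivity
  have hax : a * x = 1 - 5 * x := by
    rw [hx]
    field_simp
    ring
  have hx12 : 12 * x ≤ 1 := by linarith [mul_le_mul_of_nonneg_right ha hx0.le]
  have hr1 := N.left.one_le_ratio
  have hb := N.left.two_le_middle
  have hε : 0 ≤ 2 - r ^ 3 - 11 * x := by
    rw [hx, mul_one_div]
    linarith
  have hhalf : s + 12 * x ≤ (b + 12 * x) / (b + 2) := by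
    have hs2 : s + 12 * x ≤ 0.5 := by
      linarith [half_le_neg_offset N.left.sq_add_sq hs hr1 (by linarith)]
    rw [le_div_iff₀ (by linarith)]
    linarith [mul_le_mul_of_nonneg_right hs2 (by linarith : 0 ≤ b + 2)]
  have hone : q ≤ (b + 12 * x) / (b + 2) := (N.opposite_le ha).trans (by gcongr; linarith)
  have hA : 1 ≤ A := by
    rw [Nat.one_le_iff_ne_zero]
    rintro rfl
    linarith [N.left.left_card, Nat.cast_zero (R := ℝ)]
  exact (N.left.cost_le_pred hA (by linarith) (by linarith) hhalf hone).not_gt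
    (pred_total_cost_lt hx0 hx12 hax N.left.sq_add_sq hr1 hε rfl hb N.middle_lower_bound)

end IsNormalizedPair

end CubeBounds

section CubeGap

variable {a r s r' s' R S ρ ω y z : ℝ}

theorem offset_le_offset (hr : 0 ≤ r) (hle : r ≤ r') (hrs : r ^ 2 + s ^ 2 = 2)
    (hrs' : r' ^ 2 + s' ^ 2 = 2) (hs : s ≤ 0) : s ≤ s' := by
  have hsq : r ^ 2 ≤ r' ^ 2 := by gcongr
  have : -s' ≤ -s := le_of_pow_le_pow_left₀ two_ne_zero (by linarith) (by linarith)
  linarith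

theorem ratio_lt_ratio (hr' : 0 ≤ r') (hrs : r ^ 2 + s ^ 2 = 2) (hrs' : r' ^ 2 + s' ^ 2 = 2)
    (hss : s < s') (hs' : s' ≤ 0) : r < r' := by
  have : (-s') ^ 2 < (-s) ^ 2 := pow_lt_pow_left₀ (by linarith) (by linarith) two_ne_zero
  exact lt_of_pow_lt_pow_left₀ 2 hr' (by linarith)

theorem exists_cube_eq_and_sq_add_sq {v : ℝ} (hv : 0 ≤ v) (hv' : v ≤ 2.78) :
    ∃ R S : ℝ, 0 ≤ R ∧ S ≤ 0 ∧ R ^ 3 = v ∧ R ^ 2 + S ^ 2 = 2 := by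
  obtain ⟨R, hR, hRv⟩ : ∃ R : ℝ, 0 ≤ R ∧ R ^ 3 = v :=
    ⟨v ^ ((3 : ℕ) : ℝ)⁻¹, by positivity, Real.rpow_inv_natCast_pow hv three_ne_zero⟩
  have hR' : R ≤ 1.4062 :=
    le_of_pow_le_pow_left₀ three_ne_zero (by norm_num) (by norm_num; linarith)
  refine ⟨R, -√(2 - R ^ 2), hR, neg_nonpos.mpr (Real.sqrt_nonneg _), hRv, ?_⟩
  rw [neg_sq, Real.sq_sqrt (by nlinarith)]
  ring

theorem bounds_of_cube_eq_two_add (hy : 0 ≤ y) (hy' : y ≤ 0.78) (hR : 0 ≤ R) (hS : S ≤ 0)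
    (hcube : R ^ 3 = 2 + y) (hRS : R ^ 2 + S ^ 2 = 2) :
    R ≤ 1.2747 + 0.1687 * y ∧ 0.642 - 3.366 * (R - 1.26) ≤ -S := by
  have hlow : 1.2599 ≤ R := le_of_pow_le_pow_left₀ three_ne_zero hR (by norm_num; linarith)
  have hhigh : R ≤ 1.4062 :=
    le_of_pow_le_pow_left₀ three_ne_zero (by norm_num) (by norm_num; linarith)
  refine ⟨?_, le_of_pow_le_pow_left₀ two_ne_zero (by linarith) ?_⟩
  · obtain rfl : y = R ^ 3 - 2 := by linarith
    linarith [mul_nonneg (sq_nonneg (R - 1.4061)) (by linarith : 0 ≤ R + 2 * 1.4061)]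
  · nlinarith [mul_nonneg (sub_nonneg.mpr hlow) (sub_nonneg.mpr hhigh)]

theorem bounds_of_cube_eq_two_sub (hz : 0 ≤ z) (hz' : z ≤ 0.55) (hR : 0 ≤ R) (hS : S ≤ 0)
    (hcube : R ^ 3 = 2 - z) (hRS : R ^ 2 + S ^ 2 = 2) :
    R ≤ 1.2751 - 0.26 * z ∧ 0.642 + 1.606 * (1.26 - R) ≤ -S := by
  have hlow : 1.1318 ≤ R := le_of_pow_le_pow_left₀ three_ne_zero hR (by norm_num; linarith)
  have hhigh : R ≤ 1.26 :=
    le_of_pow_le_pow_left₀ three_ne_zero (by norm_num) (by norm_num; linarith)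
  refine ⟨?_, le_of_pow_le_pow_left₀ two_ne_zero (by linarith) ?_⟩
  · obtain rfl : z = 2 - R ^ 3 := by linarith
    linarith [mul_nonneg (sq_nonneg (R - 1.1319)) (by linarith : 0 ≤ R + 2 * 1.1319)]
  · nlinarith [mul_nonneg (sub_nonneg.mpr hlow) (sub_nonneg.mpr hhigh)]

theorem offset_sub_le {R' S' : ℝ} (hle : R' ≤ R) (hRS : R ^ 2 + S ^ 2 = 2)
    (hRS' : R' ^ 2 + S' ^ 2 = 2) (hS : S + S' < 0) (hsum : R + R' ≤ 2.6 * (-S - S')) :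
    S - S' ≤ 2.6 * (R - R') := by
  refine le_of_mul_le_mul_right ?_ (by linarith : 0 < -S - S')
  linarith [mul_le_mul_of_nonneg_left hsum (sub_nonneg.mpr hle)]

theorem succ_margin_mem_Ioc (ha : 11 ≤ a) : 11.7 / (a + 4) ∈ Ioc 0 0.78 :=
  ⟨by positivity, by rw [div_le_iff₀] <;> linarith⟩

theorem pred_margin_mem_Ioc (ha : 11 ≤ a) : 11 / (a + 9) ∈ Ioc 0 0.55 :=
  ⟨by positivity, by rw [div_le_iff₀] <;> linarith⟩

theorem cube_bounds_poly_lt (ha : 11 ≤ a) :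
    (2 + 11.7 / (a + 4)) * (a + 5.2) ^ 3 < (2 - 11 / (a + 9)) * (a + 9.2) ^ 3 := by
  rw [← sub_pos]
  obtain ⟨u, hu, rfl⟩ : ∃ u, 0 ≤ u ∧ a = 11 + u := ⟨a - 11, by linarith, by ring⟩
  have hpoly : 0 < (2 * (11 + u + 9) - 11) * (11 + u + 4) * (11 + u + 9.2) ^ 3
      - (2 * (11 + u + 4) + 11.7) * (11 + u + 9) * (11 + u + 5.2) ^ 3 := by
    linarith [pow_nonneg hu 2, pow_nonneg hu 3, pow_nonneg hu 4]
  refine lt_of_lt_of_eq (div_pos hpoly (by positivity : 0 < (11 + u + 9) * (11 + u + 4))) ?_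
  field_simp

theorem length_lt_length_of_cube_eq {R' S' : ℝ} (ha : 11 ≤ a) (hR : 0 ≤ R) (hS : S ≤ 0)
    (hR' : 0 ≤ R') (hS' : S' ≤ 0) (hcube : R ^ 3 = 2 + 11.7 / (a + 4))
    (hcube' : R' ^ 3 = 2 - 11 / (a + 9)) (hRS : R ^ 2 + S ^ 2 = 2) (hRS' : R' ^ 2 + S' ^ 2 = 2) :
    R * a + 2 * S < R' * (a + 4) + 2 * S' := by
  obtain ⟨hy0, hy⟩ := succ_margin_mem_Ioc ha
  obtain ⟨hz0, hz⟩ := pred_margin_mem_Ioc ha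
  have hyz : 0.705 * (11.7 / (a + 4)) ≤ 11 / (a + 9) := by
    rw [mul_div_assoc', div_le_div_iff₀ (by linarith) (by linarith)]
    linarith
  obtain ⟨hRy, hSR⟩ := bounds_of_cube_eq_two_add hy0.le hy hR hS hcube hRS
  obtain ⟨hRz', hSR'⟩ := bounds_of_cube_eq_two_sub hz0.le hz hR' hS' hcube' hRS'
  have hle : R' ≤ R := le_of_pow_le_pow_left₀ three_ne_zero hR (by linarith)
  have hdiff := offset_sub_le hle hRS hRS' (by linarith) (by linarith)
  have hscaled : R * (a + 5.2) < R' * (a + 9.2) := by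
    refine lt_of_pow_lt_pow_left₀ 3 (by positivity) ?_
    rw [mul_pow, mul_pow, hcube, hcube']
    exact cube_bounds_poly_lt ha
  linarith

theorem length_lt_length_of_cube_bounds (ha : 11 ≤ a) (hr : 0 ≤ r) (hr' : 0 ≤ r')
    (hrs : r ^ 2 + s ^ 2 = 2) (hrs' : r' ^ 2 + s' ^ 2 = 2) (hs : s ≤ 0)
    (hcube : r ^ 3 ≤ 2 + 11.7 / (a + 4)) (hcube' : 2 - 11 / (a + 9) ≤ r' ^ 3) :
    r * a + 2 * s < r' * (a + 4) + 2 * s' := by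
  obtain ⟨hy0, hy⟩ := succ_margin_mem_Ioc ha
  obtain ⟨hz0, hz⟩ := pred_margin_mem_Ioc ha
  obtain ⟨R, S, hR, hS, hR3, hRS⟩ :=
    exists_cube_eq_and_sq_add_sq (v := 2 + 11.7 / (a + 4)) (by linarith) (by linarith)
  obtain ⟨R', S', hR', hS', hR3', hRS'⟩ :=
    exists_cube_eq_and_sq_add_sq (v := 2 - 11 / (a + 9)) (by linarith) (by linarith)
  have hrR : r ≤ R := le_of_pow_le_pow_left₀ three_ne_zero hR (hcube.trans_eq hR3.symm)
  have hRr' : R' ≤ r' := le_of_pow_le_pow_left₀ three_ne_zero hr' (hR3'.trans_le hcube')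
  have hoffset := offset_le_offset hr hrR hrs hRS hs
  have hoffset' := offset_le_offset hR' hRr' hRS' hrs' hS'
  calc r * a + 2 * s ≤ R * a + 2 * S := by gcongr
    _ < R' * (a + 4) + 2 * S' := length_lt_length_of_cube_eq ha hR hS hR' hS' hR3 hR3' hRS hRS'
    _ ≤ r' * (a + 4) + 2 * s' := by gcongr

theorem length_lt_length_of_le_cube (ha : 0 ≤ a) (hr' : 0 ≤ r') (hrs : r ^ 2 + s ^ 2 = 2)
    (hrs' : r' ^ 2 + s' ^ 2 = 2) (hs : s ≤ 0) (hρ : 0 ≤ ρ) (hω : 0 ≤ ω)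
    (hρω : 2 ≤ ρ ^ 2 + ω ^ 2) (hcube : ρ ^ 3 ≤ r' ^ 3)
    (hlt : 1.4142136 * a + 2 * ω < ρ * (a + 4)) : r * a + 2 * s < r' * (a + 4) + 2 * s' := by
  have hρr : ρ ≤ r' := le_of_pow_le_pow_left₀ three_ne_zero hr' hcube
  have hsq : ρ ^ 2 ≤ r' ^ 2 := by gcongr
  have hω' : -s' ≤ ω := le_of_pow_le_pow_left₀ two_ne_zero hω (by linarith)
  have hr : r ≤ 1.4142136 := (ratio_le_sqrt_two hrs).trans sqrt_two_mem_Icc.2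
  linarith [mul_le_mul_of_nonneg_right hr ha,
    mul_le_mul_of_nonneg_right hρr (by linarith : 0 ≤ a + 4)]

theorem length_lt_length_of_index_mem_Icc {A : ℕ} (hA : A ∈ Icc 1 4) (ha : a = 2 * A + 1)
    (hr' : 0 ≤ r') (hrs : r ^ 2 + s ^ 2 = 2) (hrs' : r' ^ 2 + s' ^ 2 = 2) (hs : s ≤ 0)
    (hcube : 2 - 11 / (a + 9) ≤ r' ^ 3) : r * a + 2 * s < r' * (a + 4) + 2 * s' := by
  obtain ⟨ρ, ω, hρ, hω, hρω, hcubeρ, hlt⟩ : ∃ ρ ω : ℝ, 0 ≤ ρ ∧ 0 ≤ ω ∧ 2 ≤ ρ ^ 2 + ω ^ 2 ∧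
      ρ ^ 3 ≤ 2 - 11 / (a + 9) ∧ 1.4142136 * a + 2 * ω < ρ * (a + 4) := by
    obtain ⟨h1, h4⟩ := hA
    subst ha
    interval_cases A
    · exact ⟨1.027, 0.9723, by norm_num⟩
    · exact ⟨1.0668, 0.9285, by norm_num⟩
    · exact ⟨1.0948, 0.8953, by norm_num⟩
    · exact ⟨1.1157, 0.8691, by norm_num⟩
  exact length_lt_length_of_le_cube (by rw [ha]; positivity) hr' hrs hrs' hs hρ hω hρω
    (hcubeρ.trans hcube) hlt

end CubeGap

section IndexGrowth

variable {n A B A' B' : ℕ} {a e b r s t q a' e' b' r' s' t' q' : ℝ}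

namespace IsNormalizedSide

theorem mul_le_sqrt_two_mul (N : IsNormalizedSide A a b r s q) : r * a ≤ √2 * a :=
  mul_le_mul_of_nonneg_right (ratio_le_sqrt_two N.sq_add_sq) (by linarith [N.one_le_left])

theorem sqrt_two_mul_le (N : IsNormalizedSide A a b r s q) (hs : 0 ≤ s) (hq : -1 ≤ q) :
    √2 * a ≤ r * a + 2 * s := by
  have ha := N.one_le_left
  have hr := N.one_le_ratio
  have hb := N.two_le_middle
  have hsqrt := sqrt_two_mem_Icc.1
  have hab : 2 * a ≤ 3 * b := by
    linarith [mul_le_mul_of_nonneg_right hr (by linarith : 0 ≤ a), N.balance]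
  have hsa : s * a ≤ r + 3 := calc
    s * a ≤ (r / a + 2 / b) * a := by gcongr; exact N.offset_le
    _ = r + 2 * a / b := by field_simp
    _ ≤ r + 3 := by gcongr; rwa [div_le_iff₀ (by linarith)]
  have hdiff : (√2 - r) * (√2 + r) = s ^ 2 := by
    linarith [Real.sq_sqrt (zero_le_two : (0 : ℝ) ≤ 2), N.sq_add_sq]
  have : (√2 - r) * a ≤ 2 * s := by
    refine le_of_mul_le_mul_right ?_ (by linarith : 0 < √2 + r)
    calc (√2 - r) * a * (√2 + r) = s * (s * a) := by linear_combination a * hdiff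
      _ ≤ s * (2 * (√2 + r)) := mul_le_mul_of_nonneg_left (by linarith) hs
      _ = 2 * s * (√2 + r) := by ring
  linarith

end IsNormalizedSide

namespace IsNormalizedPair

theorem middle_card_add_two (N : IsNormalizedPair n A B a e b r s t q)
    (N' : IsNormalizedPair (n + 2) A' B' a' e' b' r' s' t' q') :
    b' = b + 2 * (2 - (A' - A) - (B' - B)) := by
  rw [N'.middle_card, N.middle_card]
  push_cast
  ring

theorem index_ne_add_two_of_nonneg (N : IsNormalizedPair n A B a e b r s t q)
    (N' : IsNormalizedPair (n + 2) A' B' a' e' b' r' s' t' q') (hB : B ≤ B') (hs' : 0 ≤ s') :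
    A' ≠ A + 2 := by
  rintro rfl
  have hB' : (B : ℝ) ≤ B' := mod_cast hB
  have hb := N.middle_card_add_two N'
  have ha := N.left.left_card
  have ha' := N'.left.left_card
  push_cast at hb ha'
  obtain rfl : a' = a + 4 := by linarith
  linarith [N'.left.sqrt_two_mul_le hs' N'.right.neg_one_le_offset, N.left.mul_le_sqrt_two_mul,
    N.left.balance, N'.left.balance, N.left.opposite_lt_one, N.left.offset_lt_one,
    N'.right.neg_one_le_offset, sqrt_two_mem_Icc.1]

theorem index_ne_add_one_of_neg_of_nonneg (N : IsNormalizedPair n A B a e b r s t q)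
    (N' : IsNormalizedPair (n + 2) A' B' a' e' b' r' s' t' q') (hB : B ≤ B') (hs : s < 0)
    (hs' : 0 ≤ s') : A' ≠ A + 1 := by
  rintro rfl
  have hb := N.middle_card_add_two N'
  have ha := N.left.left_card
  have ha' := N'.left.left_card
  push_cast at hb ha'
  obtain rfl : a' = a + 2 := by linarith
  have hlength := N'.left.sqrt_two_mul_le hs' N'.right.neg_one_le_offset
  have hra := N.left.mul_le_sqrt_two_mul
  have hbal := N.left.balance
  have hbal' := N'.left.balance
  have hq := N.left.opposite_lt_one
  have hq' := N'.right.neg_one_le_offset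
  have hs1 := N'.left.offset_lt_one
  have hsqrt := sqrt_two_mem_Icc.1
  rcases hB.eq_or_lt with rfl | hlt
  · obtain rfl : e' = e := by rw [N'.right.left_card, N.right.left_card]
    have hbalR := N.right.balance
    have hbalR' := N'.right.balance
    rcases le_or_gt q 0 with hq0 | hq0
    · have ht : t' < t := ratio_lt_ratio (by linarith [N.right.one_le_ratio])
        N'.right.sq_add_sq N.right.sq_add_sq (by linarith) hq0
      linarith [mul_le_mul_of_nonneg_right ht.le (by linarith [N.right.one_le_left] : 0 ≤ e')]
    · linarith [N.right.sqrt_two_mul_le hq0.le N.left.neg_one_le_offset,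
        N'.right.mul_le_sqrt_two_mul]
  · have : (B : ℝ) + 1 ≤ B' := mod_cast hlt
    linarith

theorem length_le_length_of_index_eq (N : IsNormalizedPair n A B a e b r s t q)
    (N' : IsNormalizedPair (n + 2) (A + 2) B a' e' b' r' s' t' q') (hs : s < 0) (hs' : s' < 0) :
    r' * a' + 2 * s' ≤ r * a + 2 * s := by
  have hb := N.middle_card_add_two N'
  have ha := N.left.left_card
  have ha' := N'.left.left_card
  push_cast at hb ha'
  obtain rfl : b' = b := by linarith
  obtain rfl : a' = a + 4 := by linarith
  obtain rfl : e' = e := by rw [N'.right.left_card, N.right.left_card]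
  have hbal := N.left.balance
  have hbal' := N'.left.balance
  have hq1 := N.left.opposite_lt_one
  rcases lt_or_ge 0 q with hq | hq
  · have hBA : B = A + 1 := by
      have := N'.left_le
      have := N.right_le
      omega
    obtain rfl : e' = a + 2 := by
      rw [N.right.left_card, ha, hBA]
      push_cast
      ring
    linarith [N.right.sqrt_two_mul_le hq.le N.left.neg_one_le_offset,
      N.left.mul_le_sqrt_two_mul, N.right.balance, sqrt_two_mem_Icc.1]
  · by_contra! hlength
    have ht : t' < t := ratio_lt_ratio (by linarith [N.right.one_le_ratio])
      N'.right.sq_add_sq N.right.sq_add_sq (by linarith) hq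
    have hss : s < s' := by
      linarith [mul_le_mul_of_nonneg_right ht.le (by linarith [N.right.one_le_left] : 0 ≤ e'),
        N.right.balance, N'.right.balance]
    have hr1 := N'.left.one_le_ratio
    have hr := ratio_lt_ratio (by linarith) N.left.sq_add_sq N'.left.sq_add_sq hss hs'.le
    linarith [mul_le_mul_of_nonneg_right hr.le (by linarith [N.left.one_le_left] : 0 ≤ a),
      N'.right.neg_one_le_offset]

theorem length_le_length (N : IsNormalizedPair n A B a e b r s t q)
    (N' : IsNormalizedPair (n + 2) (A + 2) B' a' e' b' r' s' t' q') (hB : B ≤ B') (hs : s < 0)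
    (hs' : s' < 0) : r' * a' + 2 * s' ≤ r * a + 2 * s := by
  rcases hB.eq_or_lt with rfl | hlt
  · exact N.length_le_length_of_index_eq N' hs hs'
  · have : (B : ℝ) + 1 ≤ B' := mod_cast hlt
    have hb := N.middle_card_add_two N'
    push_cast at hb
    linarith [N.left.balance, N'.left.balance, N.left.opposite_lt_one, N'.right.neg_one_le_offset]

theorem index_ne_add_two_of_neg (N : IsNormalizedPair n A B a e b r s t q)
    (N' : IsNormalizedPair (n + 2) A' B' a' e' b' r' s' t' q') (hA : 1 ≤ A) (hB : B ≤ B')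
    (hs : s < 0) (hs' : s' < 0) : A' ≠ A + 2 := by
  rintro rfl
  have ha := N.left.left_card
  have ha' := N'.left.left_card
  push_cast at ha'
  obtain rfl : a' = a + 4 := by linarith
  have hA1 : (1 : ℝ) ≤ A := mod_cast hA
  have hr := N.left.ratio_pos.le
  have hr' := N'.left.ratio_pos.le
  have hcube' : 2 - 11 / (a + 9) ≤ r' ^ 3 := by
    have := N'.le_cube (by linarith) hs'.le
    rwa [show a + 4 + 5 = a + 9 by ring] at this
  refine (N.length_le_length N' hB hs hs').not_gt ?_
  rcases le_or_gt A 4 with h4 | h5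
  · exact length_lt_length_of_index_mem_Icc ⟨hA, h4⟩ ha hr' N.left.sq_add_sq N'.left.sq_add_sq
      hs.le hcube'
  · have h5' : (5 : ℝ) ≤ A := mod_cast h5
    have ha11 : 11 ≤ a := by linarith
    exact length_lt_length_of_cube_bounds ha11 hr hr' N.left.sq_add_sq N'.left.sq_add_sq hs.le
      (N.cube_le ha11) hcube'

end IsNormalizedPair

end IndexGrowth

section Counting

variable {f : ℝ → ℝ} {lo hi x y h g h' g' : ℝ} {n A B A' B' H K L i : ℕ} {c p c' p' : ℕ → ℝ}
  {a e b r s t q a' e' b' r' s' t' q' : ℝ}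

namespace IsOptimalQuantizer

theorem strictMonoOn_point (ho : IsOptimalQuantizer f lo hi 0 n c p) (hf : IsDensityOn f lo hi)
    (hlh : lo < hi) : StrictMonoOn p (Iio n) :=
  fun i _ _ hj hij => ho.point_lt_point hf hlh i.zero_le hij hj

theorem point_mem_Icc (ho : IsOptimalQuantizer f lo hi 0 n c p) (hf : IsDensityOn f lo hi)
    (hlh : lo < hi) (hin : i < n) : p i ∈ Icc lo hi := by
  have hcell := ho.point_mem_Ioo hf hlh i.zero_le hin
  exact ⟨(ho.isPartition.lo_le i.zero_le hin.le).trans hcell.1.le,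
    hcell.2.le.trans (ho.isPartition.le_hi (i + 1).zero_le hin)⟩

theorem ncard_image_inter_Icc (ho : IsOptimalQuantizer f lo hi 0 n c p) (hf : IsDensityOn f lo hi)
    (hlh : lo < hi) (hKn : K ≤ n) (hK : ∀ i < n, p i ≤ x ↔ i < K) :
    (p '' Iio n ∩ Icc lo x).ncard = K := by
  have himage : p '' Iio n ∩ Icc lo x = p '' Iio K := by
    rw [← image_inter_preimage]
    congr 1
    ext i
    have hmem (hin : i < n) := (ho.point_mem_Icc hf hlh hin).1
    simp only [mem_inter_iff, mem_Iio, mem_preimage, mem_Icc]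
    grind
  rw [himage, ((ho.strictMonoOn_point hf hlh).injOn.mono (Iio_subset_Iio hKn)).ncard_image,
    ncard_Iio_nat]

theorem ncard_image_inter_Ioo (ho : IsOptimalQuantizer f lo hi 0 n c p) (hf : IsDensityOn f lo hi)
    (hlh : lo < hi) (hLn : L ≤ n) (hK : ∀ i < n, p i ≤ x ↔ i < K) (hL : ∀ i < n, p i < y ↔ i < L) :
    (p '' Iio n ∩ Ioo x y).ncard = L - K := by
  have himage : p '' Iio n ∩ Ioo x y = p '' Ico K L := by
    rw [← image_inter_preimage]
    congr 1
    ext i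
    simp only [mem_inter_iff, mem_Iio, mem_preimage, mem_Ioo, mem_Ico]
    grind
  have hsub : Ico K L ⊆ Iio n := fun i hi => hi.2.trans_le hLn
  rw [himage, ((ho.strictMonoOn_point hf hlh).injOn.mono hsub).ncard_image, ncard_Ico_nat]

theorem point_lt_center_iff (ho : IsOptimalQuantizer f2 0 (3 / 2) 0 n c p) (hH : n = H + H)
    (hin : i < n) : p i < 3 / 4 ↔ i < H := by
  have hd := ho.reflect_f2
  have hf := isDensityOn_f2
  have hmono := (ho.strictMonoOn_point hf (by norm_num)).monotoneOn
  have hbelow := ho.point_lt_point_succ hd hf (by norm_num) (i := H - 1) (by omega)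
  have habove := hd.point_lt_point_succ ho hf (by norm_num) (i := H - 1) (by omega)
  simp only [show H - 1 + 1 = H by omega, show n - 1 - H = H - 1 by omega,
    show n - 1 - (H - 1) = H by omega] at hbelow habove
  constructor <;> intro hi
  · by_contra! hHi
    linarith [hmono (mem_Iio.mpr (hHi.trans_lt hin)) hin hHi]
  · linarith [hmono hin (mem_Iio.mpr (by omega : H - 1 < n)) (by omega)]

end IsOptimalQuantizer

/-- The number of points of an optimal quantizer in `[0, 1 / 2]`, when `A` is the index of the cell
around `1 / 2` and `s` has the sign of `1 / 2 - p A`. -/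
noncomputable def leftCount (A : ℕ) (s : ℝ) : ℕ :=
  if 0 ≤ s then A + 1 else A

namespace IsOptimalSide

theorem leftCount_lt_card (S : IsOptimalSide n A B c p h g) (s : ℝ) : leftCount A s < n := by
  have := S.lt_card
  unfold leftCount
  split_ifs <;> omega

theorem point_le_half_iff (S : IsOptimalSide n A B c p h g) (hin : i < n) :
    p i ≤ 1 / 2 ↔ i < leftCount A ((1 / 2 - (2 * A + 1) * h) / g) := by
  have hcell := S.isOptimalQuantizer.point_mem_Ioo isDensityOn_f2 (by norm_num) i.zero_le hin
  have hlt := S.lt_card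
  have hpart := S.isOptimalQuantizer.isPartition
  have hA : p A ≤ 1 / 2 ↔ 0 ≤ (1 / 2 - (2 * A + 1) * h) / g := by
    rw [S.hasProfile.point_left A le_rfl, le_div_iff₀ S.gap_pos, zero_mul, sub_nonneg]
  unfold leftCount
  rcases lt_trichotomy i A with hi | rfl | hi
  · have hle := hpart.mono (Nat.zero_le _) hi (by omega)
    exact iff_of_true (hcell.2.le.trans (hle.trans S.hasProfile.half_mem.1))
      (by split_ifs <;> omega)
  · rw [hA]
    split_ifs with hs <;> simp only [hs, lt_add_one, lt_irrefl]
  · have hle := hpart.mono (Nat.zero_le _) hi hin.le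
    exact iff_of_false ((S.half_lt.trans_le hle).trans hcell.1).not_ge (by split_ifs <;> omega)

theorem leftCount_le_half (S : IsOptimalSide n A B c p h g) (hH : n = H + H) :
    leftCount A ((1 / 2 - (2 * A + 1) * h) / g) ≤ H := by
  have hlt := S.lt_card
  by_contra! hHK
  have hle := (S.point_le_half_iff (by omega)).mpr hHK
  have := (S.isOptimalQuantizer.point_lt_center_iff hH (i := H) (by omega)).mp (by linarith)
  omega

theorem ncard_inter_Icc (S : IsOptimalSide n A B c p h g) :
    (p '' Iio n ∩ Icc 0 (1 / 2)).ncard = leftCount A ((1 / 2 - (2 * A + 1) * h) / g) :=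
  S.isOptimalQuantizer.ncard_image_inter_Icc isDensityOn_f2 (by norm_num)
    (S.leftCount_lt_card _).le fun _ hin => S.point_le_half_iff hin

theorem ncard_inter_Ioo (S : IsOptimalSide n A B c p h g) (hH : n = H + H) :
    (p '' Iio n ∩ Ioo (1 / 2) (3 / 4)).ncard
      = H - leftCount A ((1 / 2 - (2 * A + 1) * h) / g) :=
  S.isOptimalQuantizer.ncard_image_inter_Ioo isDensityOn_f2 (by norm_num) (by omega)
    (fun _ hin => S.point_le_half_iff hin)
    (fun _ hin => S.isOptimalQuantizer.point_lt_center_iff hH hin)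

theorem index_le_index (S : IsOptimalSide n A B c p h g)
    (S' : IsOptimalSide (n + 2) A' B' c' p' h' g') : A ≤ A' := by
  by_contra! hlt
  have hAn := S.lt_card
  have hbreak := S.isOptimalQuantizer.break_le_break S'.isOptimalQuantizer isDensityOn_f2
    (by norm_num) (by omega) (i := A) (by omega)
  have hmono := S'.isOptimalQuantizer.isPartition.mono (Nat.zero_le _) hlt (by omega)
  linarith [S.hasProfile.half_mem.1, S'.half_lt]

theorem index_le_index_add_two (S : IsOptimalSide n A B c p h g)
    (S' : IsOptimalSide (n + 2) A' B' c' p' h' g') : A' ≤ A + 2 := by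
  by_contra! hlt
  have hAn' := S'.lt_card
  have hbreak := S.isOptimalQuantizer.break_le_break_add S'.isOptimalQuantizer isDensityOn_f2
    (by norm_num) (by omega) (i := A + 1) (by omega)
  rw [Nat.add_sub_cancel_left] at hbreak
  have hmono := S'.isOptimalQuantizer.isPartition.mono (i := A + 1 + 2) (Nat.zero_le _) hlt
    (by omega)
  linarith [S.half_lt, S'.hasProfile.half_mem.1]

theorem leftCount_le_leftCount (S : IsOptimalSide n A B c p h g)
    (S' : IsOptimalSide (n + 2) A' B' c' p' h' g') :
    leftCount A ((1 / 2 - (2 * A + 1) * h) / g)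
      ≤ leftCount A' ((1 / 2 - (2 * A' + 1) * h') / g') := by
  by_contra! hlt
  have hin := hlt.trans (S.leftCount_lt_card _)
  have hpoint := S.isOptimalQuantizer.point_le_point S'.isOptimalQuantizer isDensityOn_f2
    (by norm_num) (by omega) hin
  have hhalf := (S.point_le_half_iff hin).mpr hlt
  exact lt_irrefl _ ((S'.point_le_half_iff (by omega)).mp (hpoint.trans hhalf))

theorem leftCount_le_leftCount_add_two (S : IsOptimalSide n A B c p h g)
    (S' : IsOptimalSide (n + 2) A' B' c' p' h' g') :
    leftCount A' ((1 / 2 - (2 * A' + 1) * h') / g')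
      ≤ leftCount A ((1 / 2 - (2 * A + 1) * h) / g) + 2 := by
  by_contra! hlt
  have hin := hlt.trans (S'.leftCount_lt_card _)
  have hpoint := S.isOptimalQuantizer.point_le_point_add S'.isOptimalQuantizer isDensityOn_f2
    (by norm_num) (by omega) (i := leftCount A ((1 / 2 - (2 * A + 1) * h) / g)) (by omega)
  rw [Nat.add_sub_cancel_left] at hpoint
  have hhalf := (S'.point_le_half_iff hin).mpr hlt
  exact lt_irrefl _ ((S.point_le_half_iff (by omega)).mp (hpoint.trans hhalf))

end IsOptimalSide

theorem IsNormalizedPair.leftCount_ne_add_two (N : IsNormalizedPair n A B a e b r s t q)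
    (N' : IsNormalizedPair (n + 2) A' B' a' e' b' r' s' t' q') (hpos : 0 < leftCount A s)
    (hA : A' ≤ A + 2) (hB : B ≤ B') : leftCount A' s' ≠ leftCount A s + 2 := by
  unfold leftCount at hpos ⊢
  split_ifs at hpos ⊢ with hs' hs hs
  · have := N.index_ne_add_two_of_nonneg N' hB hs'
    omega
  · have := N.index_ne_add_one_of_neg_of_nonneg N' hB (not_le.mp hs) hs'
    omega
  · omega
  · exact N.index_ne_add_two_of_neg N' hpos hB (not_le.mp hs) (not_le.mp hs')

end Counting

theorem stmt_11 (n : ℕ) (hn : 4 ≤ n) (hne : Even n)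
    (α : Set ℝ) (hα : IsOptimal P2 n α)
    (k m : ℕ) (hk : 0 < k) (hm : 0 < m)
    (hkc : (α ∩ Icc (0 : ℝ) (1 / 2)).ncard = k)
    (hmc : (α ∩ Ioo (1 / 2 : ℝ) (3 / 4)).ncard = m) :
    ∀ β : Set ℝ, IsOptimal P2 (n + 2) β →
      ((β ∩ Icc (0 : ℝ) (1 / 2)).ncard = k + 1 ∧
        (β ∩ Ioo (1 / 2 : ℝ) (3 / 4)).ncard = m) ∨
      ((β ∩ Icc (0 : ℝ) (1 / 2)).ncard = k ∧
        (β ∩ Ioo (1 / 2 : ℝ) (3 / 4)).ncard = m + 1) := by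
  intro β hβ
  obtain ⟨H, hH⟩ := hne
  have hH' : n + 2 = (H + 1) + (H + 1) := by omega
  obtain ⟨c, p, ho, rfl⟩ := hasDensityOn_P2.exists_isOptimalQuantizer (by norm_num) hα
  obtain ⟨c', p', ho', rfl⟩ := hasDensityOn_P2.exists_isOptimalQuantizer (by norm_num) hβ
  obtain ⟨A, B, h, l, g, S, T⟩ := ho.exists_isOptimalSide hn
  obtain ⟨A', B', h', l', g', S', T'⟩ := ho'.exists_isOptimalSide (by omega)
  rw [S.ncard_inter_Icc] at hkc
  rw [S.ncard_inter_Ioo hH, hkc] at hmc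
  rw [S'.ncard_inter_Icc, S'.ncard_inter_Ioo hH']
  have hne := (S.isNormalizedPair T).leftCount_ne_add_two (S'.isNormalizedPair T') (hkc ▸ hk)
    (S.index_le_index_add_two S') (T.index_le_index T')
  have hle := S.leftCount_le_leftCount S'
  have hle' := S.leftCount_le_leftCount_add_two S'
  have hhalf := S'.leftCount_le_half hH'
  omega
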